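/- arXiv:1306.4164 — 3 statements merged into one kernel-verified Lean document; each statement's English description precedes it below -/
import Mathlib

section
/- For every unicyclic graph G on n vertices (n ≥ 3), H_A(G) ≤ (3/2)(n² − n + 2), with equality if and only if G is isomorphic to the cycle-star graph CS_{3,n−3}. -/
open Finset SimpleGraph

/-- Degree of a vertex (number of neighbors). -/
noncomputable def deg {V : Type*} [Fintype V] (G : SimpleGraph V) (v : V) : ℕ :=
  Nat.card {w // G.Adj v w}

open scoped Classical in
/-- Additively weighted Harary index: sum over unordered pairs of distinct
vertices of (deg u + deg v) / d(u,v). -/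
noncomputable def HA {V : Type*} [Fintype V] (G : SimpleGraph V) : ℝ :=
  (1/2) * ∑ u : V, ∑ v : V, if u = v then 0 else
    ((deg G u + deg G v : ℕ) : ℝ) / (G.dist u v)

/-- A unicyclic graph: connected with as many edges as vertices. -/
def Unicyclic {V : Type*} [Fintype V] (G : SimpleGraph V) : Prop :=
  G.Connected ∧ Nat.card G.edgeSet = Fintype.card V

/-- k-th harmonicNum number. -/
noncomputable def harmonicNum (k : ℕ) : ℝ := ∑ i ∈ Finset.range k, (1 : ℝ) / (i + 1)

/-- CS_{3,n-3}: a triangle on vertices 0,1,2 with n-3 leaves attached to vertex 0. -/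
def cycleStar3 (n : ℕ) : SimpleGraph (Fin n) :=
  SimpleGraph.fromRel (fun i j => ((i : ℕ) < 3 ∧ (j : ℕ) < 3) ∨ ((i : ℕ) = 0 ∧ 3 ≤ (j : ℕ)))

/-- CP_{k,n-k}: cycle 0,...,k-1 with the path k,k+1,...,n-1 attached to vertex 0
(for k = n this is just the cycle C_n). -/
def cyclePath (n k : ℕ) : SimpleGraph (Fin n) :=
  SimpleGraph.fromRel (fun i j =>
    ((i : ℕ) < k ∧ (j : ℕ) < k ∧ ((j : ℕ) = (i : ℕ) + 1 ∨ ((i : ℕ) = 0 ∧ (j : ℕ) = k - 1)))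
    ∨ ((i : ℕ) = 0 ∧ (j : ℕ) = k)
    ∨ (k ≤ (i : ℕ) ∧ (j : ℕ) = (i : ℕ) + 1))

/-- A vertex lies on a cycle of G. -/
def OnCycle {V : Type*} (G : SimpleGraph V) (v : V) : Prop :=
  ∃ p : G.Walk v v, p.IsCycle

/-- Cycle-star graph: unicyclic, and every vertex of degree ≥ 2 lies on the cycle
(equivalently, every non-cycle vertex is a leaf attached to a cycle vertex). -/
def IsCycleStar {V : Type*} [Fintype V] (G : SimpleGraph V) : Prop :=
  Unicyclic G ∧ ∀ v, 2 ≤ deg G v → OnCycle G v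

/-- Cycle-path graph: unicyclic, cycle vertices have degree ≤ 3 and non-cycle
vertices have degree ≤ 2 (at most one pendant path per cycle vertex). -/
def IsCyclePath {V : Type*} [Fintype V] (G : SimpleGraph V) : Prop :=
  Unicyclic G ∧ ∀ v, (OnCycle G v → deg G v ≤ 3) ∧ (¬ OnCycle G v → deg G v ≤ 2)

/-- Length of the unique cycle of a unicyclic graph: number of vertices on a cycle. -/
noncomputable def cycleLength {V : Type*} [Fintype V] (G : SimpleGraph V) : ℕ :=
  Nat.card {v // OnCycle G v}

/-- Value of H_A(CP_{3,n-3}). -/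
noncomputable def CPval (n : ℕ) : ℝ :=
  4 * ∑ i ∈ Finset.range (n - 2), harmonicNum (n - i - 2)
    + harmonicNum (n - 3) + 3 * harmonicNum (n - 2) + (6 * (n : ℝ) - 13) / ((n : ℝ) - 2)

lemma deg_eq {n : ℕ} (G : SimpleGraph (Fin n)) [DecidableRel G.Adj] (v : Fin n) :
    deg G v = G.degree v := by
  unfold deg
  rw [Nat.card_eq_fintype_card, ← SimpleGraph.card_neighborSet_eq_degree]
  exact Fintype.card_congr (Equiv.refl _)

open scoped Classical in
noncomputable def gfun {n : ℕ} (G : SimpleGraph (Fin n)) (u v : Fin n) : ℝ :=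
  if u = v then 0 else 1 / (G.dist u v : ℝ)

open scoped Classical in
noncomputable def hfun {n : ℕ} (G : SimpleGraph (Fin n)) (u v : Fin n) : ℝ :=
  if u = v then 0 else if G.Adj u v then 1 else 1 / 2

lemma HA_eq {n : ℕ} (G : SimpleGraph (Fin n)) :
    HA G = ∑ u, ∑ v, (deg G u : ℝ) * gfun G u v := by
  unfold HA
  have h1 : ∀ u v : Fin n, (if u = v then (0:ℝ) else
    ((deg G u + deg G v : ℕ) : ℝ) / (G.dist u v)) =
      (deg G u : ℝ) * gfun G u v + (deg G v : ℝ) * gfun G v u := by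
    intro u v
    unfold gfun
    by_cases h : u = v
    · simp [h]
    · have h' : ¬ v = u := fun e => h e.symm
      rw [if_neg h, if_neg h, if_neg h', G.dist_comm (u := v)]
      push_cast; ring
  have h2 : ∑ u : Fin n, ∑ v : Fin n, (deg G v : ℝ) * gfun G v u =
      ∑ u, ∑ v, (deg G u : ℝ) * gfun G u v := Finset.sum_comm
  have h3 : (∑ u : Fin n, ∑ v : Fin n, if u = v then (0:ℝ) else
    ((deg G u + deg G v : ℕ) : ℝ) / (G.dist u v)) =
     2 * ∑ u, ∑ v, (deg G u : ℝ) * gfun G u v := by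
    simp_rw [h1, Finset.sum_add_distrib]
    rw [h2]; ring
  have h4 := congrArg (fun t => (1/2 : ℝ) * t) h3
  refine Eq.trans ?_ (h4.trans (by ring))
  refine congrArg (fun t => (1/2 : ℝ) * t) (Finset.sum_congr rfl fun u _ =>
    Finset.sum_congr rfl fun v _ => ?_)
  split_ifs <;> rfl

lemma hsum {n : ℕ} (G : SimpleGraph (Fin n)) (u : Fin n) :
    ∑ v, hfun G u v = ((n : ℝ) - 1 + deg G u) / 2 := by
  classical
  have h1 : ∀ v, hfun G u v = 1/2 - (if u = v then 1/2 else 0) + (if G.Adj u v then 1/2 else 0) := by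
    intro v
    unfold hfun
    by_cases h : u = v
    · subst h; simp
    · by_cases h' : G.Adj u v <;> simp [h, h'] <;> norm_num
  have h2 : ∑ v, (if G.Adj u v then (1/2:ℝ) else 0) = deg G u / 2 := by
    rw [deg_eq, ← Finset.sum_filter, Finset.sum_const, ← SimpleGraph.card_neighborFinset_eq_degree,
      SimpleGraph.neighborFinset_eq_filter]
    simp; ring
  simp_rw [h1, Finset.sum_add_distrib, Finset.sum_sub_distrib]
  rw [h2]
  simp; ring

lemma sum_deg {n : ℕ} (G : SimpleGraph (Fin n)) (hG : Unicyclic G) :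
    ∑ v, deg G v = 2 * n := by
  classical
  have := G.sum_degrees_eq_twice_card_edges
  simp_rw [deg_eq]
  rw [this]
  have h := hG.2
  rw [Nat.card_eq_fintype_card, Fintype.card_fin] at h
  rw [SimpleGraph.edgeFinset, Set.toFinset_card, h]

lemma hT {n : ℕ} (G : SimpleGraph (Fin n)) (hG : Unicyclic G) :
    ∑ u, ∑ v, (deg G u : ℝ) * hfun G u v = (n:ℝ) * (n - 1) + (∑ u, (deg G u : ℝ)^2) / 2 := by
  have h : ∑ v, (deg G v : ℝ) = 2 * n := by exact_mod_cast sum_deg G hG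
  have h1 : ∀ u, ∑ v, (deg G u : ℝ) * hfun G u v =
      (deg G u : ℝ) * ((n - 1)/2) + (deg G u : ℝ)^2 / 2 := by
    intro u
    rw [← Finset.mul_sum, hsum]; ring
  simp_rw [h1, Finset.sum_add_distrib, ← Finset.sum_mul, ← Finset.sum_div]
  rw [h]; ring

lemma dist_ge_two {n : ℕ} (G : SimpleGraph (Fin n)) (hc : G.Connected) (u v : Fin n)
    (h : u ≠ v) (h' : ¬ G.Adj u v) : 2 ≤ G.dist u v := by
  have h0 := hc.pos_dist_of_ne h
  have h1 : G.dist u v ≠ 1 := fun e => h' (SimpleGraph.dist_eq_one_iff_adj.1 e)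
  omega

lemma g_le_h {n : ℕ} (G : SimpleGraph (Fin n)) (hc : G.Connected) (u v : Fin n) :
    gfun G u v ≤ hfun G u v := by
  unfold gfun hfun
  split_ifs with h h'
  · exact le_rfl
  · rw [SimpleGraph.dist_eq_one_iff_adj.2 h']; simp
  · have := dist_ge_two G hc u v h h'
    have : (2:ℝ) ≤ G.dist u v := by exact_mod_cast this
    exact one_div_le_one_div_of_le (by norm_num) this

lemma dist_le_of_eq {n : ℕ} (G : SimpleGraph (Fin n)) (hc : G.Connected) (u v : Fin n)
    (h : gfun G u v = hfun G u v) (h1 : u ≠ v) (h2 : ¬ G.Adj u v) : G.dist u v = 2 := by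
  unfold gfun hfun at h
  rw [if_neg h1, if_neg h1, if_neg h2] at h
  have : (G.dist u v : ℝ) = 2 := by
    simpa using h
  exact_mod_cast this

lemma common_of_dist {n : ℕ} (G : SimpleGraph (Fin n)) (hc : G.Connected) (u v : Fin n)
    (h : G.dist u v = 2) : ∃ w, G.Adj u w ∧ G.Adj w v := by
  obtain ⟨p, hp⟩ := hc.exists_walk_length_eq_dist u v
  rw [h] at hp
  match p, hp with
  | .cons h1 (.cons h2 .nil), _ => exact ⟨_, h1, h2⟩

lemma deg_pos' {n : ℕ} (hn : 3 ≤ n) (G : SimpleGraph (Fin n)) (hc : G.Connected) (v : Fin n) :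
    1 ≤ deg G v := by
  classical
  haveI : Nontrivial (Fin n) := Fin.nontrivial_iff_two_le.2 (by omega)
  rw [deg_eq]
  exact hc.preconnected.degree_pos_of_nontrivial v

def Dom {n : ℕ} (G : SimpleGraph (Fin n)) (c : Fin n) : Prop := ∀ v, v ≠ c → G.Adj c v

lemma nbr_of_two {n : ℕ} (G : SimpleGraph (Fin n)) (s : Finset (Fin n)) (v : Fin n)
    (h : ∀ w ∈ s, G.Adj v w) : s.card ≤ deg G v ∧ (deg G v = s.card → ∀ w, G.Adj v w → w ∈ s) := by
  classical
  have hs : s ⊆ G.neighborFinset v := by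
    intro w hw; simpa using h w hw
  rw [deg_eq, ← SimpleGraph.card_neighborFinset_eq_degree]
  refine ⟨Finset.card_le_card hs, fun e w hw => ?_⟩
  rw [Finset.eq_of_subset_of_card_le hs e.le]
  simpa using hw

lemma dom_deg {n : ℕ} (G : SimpleGraph (Fin n)) (c : Fin n) : Dom G c ↔ n - 1 ≤ deg G c := by
  classical
  rw [deg_eq]
  constructor
  · intro h
    have := nbr_of_two G (Finset.univ.erase c) c (fun w hw => h w (Finset.ne_of_mem_erase hw))
    rw [deg_eq] at this
    simpa [Finset.card_erase_of_mem] using this.1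
  · intro h v hv
    have hs : G.neighborFinset c ⊆ Finset.univ.erase c := by
      intro w hw
      simp at hw ⊢
      exact hw.ne'
    have := Finset.eq_of_subset_of_card_le hs (by simpa [Finset.card_erase_of_mem] using h)
    have hv' : v ∈ G.neighborFinset c := by rw [this]; simpa using hv
    simpa using hv'

lemma deg_le {n : ℕ} (G : SimpleGraph (Fin n)) (c : Fin n) : deg G c ≤ n - 1 := by
  classical
  rw [deg_eq]
  have := G.degree_lt_card_verts c
  simp at this; omega

lemma dom_struct {n : ℕ} (hn : 3 ≤ n) (G : SimpleGraph (Fin n)) (hG : Unicyclic G) (c : Fin n)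
    (hc : Dom G c) : ∃ a b, a ≠ c ∧ b ≠ c ∧ a ≠ b ∧ G.Adj a b ∧ deg G a = 2 ∧ deg G b = 2 ∧
      deg G c = n - 1 ∧ ∀ v, v ≠ a → v ≠ b → v ≠ c → deg G v = 1 := by
  classical
  have hdc : deg G c = n - 1 := le_antisymm (deg_le G c) ((dom_deg G c).1 hc)
  have hs := sum_deg G hG
  have hex : ∃ a b, a ≠ c ∧ b ≠ c ∧ G.Adj a b := by
    by_contra! hne
    have h1 : ∀ v ∈ Finset.univ.erase c, deg G v = 1 := by
      intro v hv
      have hv := Finset.ne_of_mem_erase hv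
      rw [deg_eq, ← SimpleGraph.card_neighborFinset_eq_degree, Finset.card_eq_one]
      refine ⟨c, ?_⟩
      ext w
      simp only [SimpleGraph.mem_neighborFinset, Finset.mem_singleton]
      constructor
      · intro h; by_contra h'; exact hne v w hv h' h
      · rintro rfl; exact (hc v hv).symm
    rw [← Finset.add_sum_erase _ _ (Finset.mem_univ c), Finset.sum_congr rfl h1, hdc] at hs
    simp [Finset.card_erase_of_mem] at hs
    omega
  obtain ⟨a, b, ha, hb, hab⟩ := hex
  have hne := hab.ne
  have da : 2 ≤ deg G a := by
    have := (nbr_of_two G {c, b} a (by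
      intro w hw; simp at hw; rcases hw with rfl | rfl
      · exact (hc a ha).symm
      · exact hab)).1
    rwa [Finset.card_pair hb.symm] at this
  have db : 2 ≤ deg G b := by
    have := (nbr_of_two G {c, a} b (by
      intro w hw; simp at hw; rcases hw with rfl | rfl
      · exact (hc b hb).symm
      · exact hab.symm)).1
    rwa [Finset.card_pair ha.symm] at this
  have hle : ∀ v ∈ (Finset.univ : Finset (Fin n)),
      (if v = c then n - 1 else if v = a ∨ v = b then 2 else 1) ≤ deg G v := by
    intro v _
    split_ifs with h1 h2
    · rw [h1, hdc]
    · rcases h2 with rfl | rfl <;> assumption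
    · exact deg_pos' hn G hG.1 v
  have hsum : ∑ v : Fin n, (if v = c then n - 1 else if v = a ∨ v = b then 2 else 1) = 2 * n := by
    have : ∀ v : Fin n, (if v = c then n - 1 else if v = a ∨ v = b then 2 else 1) =
      1 + (if v = c then n - 2 else 0) + (if v = a then 1 else 0) + (if v = b then 1 else 0) := by
      intro v
      split_ifs <;> grind
    simp_rw [this, Finset.sum_add_distrib]
    simp
    omega
  have heq := (Finset.sum_eq_sum_iff_of_le hle).1 (hsum.trans hs.symm)
  refine ⟨a, b, ha, hb, hne, hab, ?_, ?_, hdc, ?_⟩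
  · have := heq a (Finset.mem_univ _); simpa [ha] using this.symm
  · have := heq b (Finset.mem_univ _); simpa [hb] using this.symm
  · intro v h1 h2 h3
    have := heq v (Finset.mem_univ _); simpa [h1, h2, h3] using this.symm

lemma dom_sq {n : ℕ} (hn : 3 ≤ n) (G : SimpleGraph (Fin n)) (hG : Unicyclic G) (c : Fin n)
    (hc : Dom G c) : ∑ u, (deg G u : ℝ)^2 = (n:ℝ)^2 - n + 6 := by
  classical
  obtain ⟨a, b, ha, hb, hab, -, da, db, dc, d1⟩ := dom_struct hn G hG c hc
  have : ∀ v : Fin n, (deg G v : ℝ)^2 =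
      1 + (if v = c then ((n:ℝ)-1)^2 - 1 else 0) + (if v = a then 3 else 0)
       + (if v = b then 3 else 0) := by
    intro v
    by_cases h1 : v = c
    · subst h1
      rw [dc, Nat.cast_sub (by omega)]; simp [ha.symm, hb.symm]
    by_cases h2 : v = a
    · subst h2; rw [da]; simp [ha, hab]; norm_num
    by_cases h3 : v = b
    · subst h3; rw [db]; simp [hb, hab.symm]; norm_num
    rw [d1 v h2 h3 h1]; simp [h1, h2, h3]
  simp_rw [this, Finset.sum_add_distrib]
  simp
  ring

lemma exists_perm {n : ℕ} (z o t c a b : Fin n) (h1 : z ≠ o) (h2 : z ≠ t) (h3 : o ≠ t)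
    (ha : a ≠ c) (hb : b ≠ c) (hab : a ≠ b) :
    ∃ e : Fin n ≃ Fin n, e c = z ∧ e a = o ∧ e b = t := by
  let e1 := Equiv.swap c z
  let e2 := Equiv.swap (e1 a) o
  let e3 := Equiv.swap (e2 (e1 b)) t
  refine ⟨(e1.trans e2).trans e3, ?_⟩
  have i1 : e1 c = z := Equiv.swap_apply_left _ _
  have i2 : e2 (e1 a) = o := Equiv.swap_apply_left _ _
  have i3 : e3 (e2 (e1 b)) = t := Equiv.swap_apply_left _ _
  have i4 : e2 z = z := Equiv.swap_apply_of_ne_of_ne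
    (by rw [← i1]; exact fun h => ha (e1.injective h).symm) h1
  have i5 : e3 z = z := Equiv.swap_apply_of_ne_of_ne
    (by rw [← i4, ← i1]; exact fun h => hb (e1.injective (e2.injective h)).symm) h2
  have i6 : e3 o = o := Equiv.swap_apply_of_ne_of_ne
    (by rw [← i2]; exact fun h => hab (e1.injective (e2.injective h))) h3
  simp [i1, i2, i3, i4, i5, i6]

lemma dom_iso {n : ℕ} (hn : 3 ≤ n) (G : SimpleGraph (Fin n)) (hG : Unicyclic G) (c : Fin n)
    (hc : Dom G c) : Nonempty (G ≃g cycleStar3 n) := by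
  classical
  obtain ⟨a, b, ha, hb, hab, hadj, da, db, dc, d1⟩ := dom_struct hn G hG c hc
  have hA : ∀ x y, G.Adj x y ↔ x ≠ y ∧ (x = c ∨ y = c ∨ (x = a ∧ y = b) ∨ (x = b ∧ y = a)) := by
    intro x y
    constructor
    · intro h
      refine ⟨h.ne, ?_⟩
      by_cases hx : x = c
      · exact Or.inl hx
      by_cases hxa : x = a
      · subst hxa
        have := (nbr_of_two G {c, b} x (by
          intro w hw; simp at hw; rcases hw with rfl | rfl
          · exact (hc x ha).symm
          · exact hadj)).2 (by rw [Finset.card_pair hb.symm, da]) y h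
        simp at this; tauto
      by_cases hxb : x = b
      · subst hxb
        have := (nbr_of_two G {c, a} x (by
          intro w hw; simp at hw; rcases hw with rfl | rfl
          · exact (hc x hb).symm
          · exact hadj.symm)).2 (by rw [Finset.card_pair ha.symm, db]) y h
        simp at this; tauto
      · have := (nbr_of_two G {c} x (by
          intro w hw; simp at hw; subst hw
          exact (hc x hx).symm)).2 (by rw [d1 x hxa hxb hx]; simp) y h
        simp at this; tauto
    · rintro ⟨hne, rfl | rfl | ⟨rfl, rfl⟩ | ⟨rfl, rfl⟩⟩
      · exact hc _ hne.symm
      · exact (hc _ hne).symm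
      · exact hadj
      · exact hadj.symm
  obtain ⟨e, e0, e1, e2⟩ := exists_perm (⟨0, by omega⟩ : Fin n) ⟨1, by omega⟩ ⟨2, by omega⟩ c a b
    (by simp) (by simp) (by simp) ha hb hab
  have k0 : ∀ x, x = c ↔ (e x : ℕ) = 0 := by
    intro x; rw [← e.injective.eq_iff, e0, Fin.ext_iff]
  have k1 : ∀ x, x = a ↔ (e x : ℕ) = 1 := by
    intro x; rw [← e.injective.eq_iff, e1, Fin.ext_iff]
  have k2 : ∀ x, x = b ↔ (e x : ℕ) = 2 := by
    intro x; rw [← e.injective.eq_iff, e2, Fin.ext_iff]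
  refine ⟨⟨e, ?_⟩⟩
  intro x y
  rw [hA, cycleStar3, SimpleGraph.fromRel_adj, k0, k0, k1, k1, k2, k2, Ne, Ne,
    ← e.injective.eq_iff (a := x), Fin.ext_iff]
  omega

lemma iso_dom {n : ℕ} (hn : 3 ≤ n) (G : SimpleGraph (Fin n)) (e : G ≃g cycleStar3 n) :
    ∃ c, Dom G c := by
  have key : ∀ y : Fin n, y ≠ ⟨0, by omega⟩ → (cycleStar3 n).Adj ⟨0, by omega⟩ y := by
    intro y hy
    rw [cycleStar3, SimpleGraph.fromRel_adj]
    refine ⟨hy.symm, ?_⟩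
    simp
    omega
  refine ⟨e.symm ⟨0, by omega⟩, fun v hv => ?_⟩
  rw [← e.map_adj_iff, e.apply_symm_apply]
  exact key _ fun h => hv (by rw [← h, e.symm_apply_apply])

lemma nondom_sq {n : ℕ} (hn : 3 ≤ n) (G : SimpleGraph (Fin n)) (hG : Unicyclic G)
    (hc : ∀ c, ¬ Dom G c) : ∑ u, (deg G u : ℝ)^2 ≤ (n:ℝ)^2 - n + 6 := by
  classical
  haveI : Nonempty (Fin n) := ⟨⟨0, by omega⟩⟩
  obtain ⟨u, hu⟩ := Finite.exists_max (deg G)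
  obtain ⟨M, hM⟩ : ∃ M : ℕ, deg G u = M + 1 := ⟨deg G u - 1, by
    have := deg_pos' hn G hG.1 u; omega⟩
  have hMn : M + 3 ≤ n := by
    have := (dom_deg G u).not.1 (hc u); omega
  set x : Fin n → ℝ := fun v => (deg G v : ℝ) - 1 with hx
  have x0 : ∀ v, 0 ≤ x v := fun v => by
    have : (1:ℝ) ≤ deg G v := by exact_mod_cast deg_pos' hn G hG.1 v
    simp only [hx]; linarith
  have xM : ∀ v, x v ≤ M := fun v => by
    have : (deg G v : ℝ) ≤ M + 1 := by exact_mod_cast hM ▸ hu v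
    simp only [hx]; linarith
  have xu : x u = M := by simp [hx, hM]
  have hs : ∑ v, (deg G v : ℝ) = 2 * n := by exact_mod_cast sum_deg G hG
  have sx : ∑ v, x v = n := by
    simp only [hx, Finset.sum_sub_distrib, hs]; simp; ring
  have sq : ∑ v, (deg G v : ℝ)^2 = ∑ v, x v ^ 2 + 3 * n := by
    have : ∀ v, (deg G v : ℝ)^2 = x v ^2 + 2 * deg G v - 1 := by intro v; simp only [hx]; ring
    simp_rw [this, Finset.sum_sub_distrib, Finset.sum_add_distrib, ← Finset.mul_sum, hs]
    simp; ring
  have b1 : ∑ v, x v ^ 2 ≤ M * n := by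
    rw [← sx, Finset.mul_sum]
    exact Finset.sum_le_sum fun v _ => by nlinarith [x0 v, xM v]
  have b2 : ∑ v, x v ^ 2 ≤ (M:ℝ)^2 + (n - M)^2 := by
    rw [← Finset.add_sum_erase _ _ (Finset.mem_univ u), xu] at sx
    rw [← Finset.add_sum_erase _ _ (Finset.mem_univ u), xu]
    have := Finset.sum_sq_le_sq_sum_of_nonneg (s := Finset.univ.erase u) (f := x) (fun v _ => x0 v)
    have e : ∑ v ∈ Finset.univ.erase u, x v = n - M := by linarith
    rw [e] at this
    linarith
  have b3 : 1 ≤ M := by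
    have : (n:ℝ) ≤ n * M := by
      calc (n:ℝ) = ∑ v, x v := sx.symm
        _ ≤ ∑ v : Fin n, (M:ℝ) := Finset.sum_le_sum fun v _ => xM v
        _ = n * M := by simp
    by_contra h
    have : M = 0 := by omega
    subst this
    have : (3:ℝ) ≤ n := by exact_mod_cast hn
    simp at *; linarith
  rw [sq]
  have c1 : (M:ℝ) + 3 ≤ n := by exact_mod_cast hMn
  by_cases hM3 : 3 ≤ M
  · have : (3:ℝ) ≤ M := by exact_mod_cast hM3
    nlinarith [mul_nonneg (sub_nonneg.2 this) (sub_nonneg.2 c1)]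
  · have : M = 1 ∨ M = 2 := by omega
    rcases this with rfl | rfl
    · push_cast at *; nlinarith
    · push_cast at *; nlinarith

lemma eq_dom {n : ℕ} (hn : 3 ≤ n) (G : SimpleGraph (Fin n)) (hG : Unicyclic G)
    (h : ∀ u v, gfun G u v = hfun G u v)
    (hsq : ∑ u, (deg G u : ℝ)^2 = (n:ℝ)^2 - n + 6) : ∃ c, Dom G c := by
  classical
  by_cases hl : ∃ v, deg G v = 1
  · obtain ⟨v, hv⟩ := hl
    obtain ⟨c, hc⟩ : ∃ c, G.Adj v c := by
      rw [deg_eq] at hv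
      exact (G.degree_pos_iff_exists_adj v).1 (by omega)
    have huniq : ∀ w, G.Adj v w → w = c := fun w hw => by
      have := (nbr_of_two G {c} v (by intro w hw; simp at hw; subst hw; exact hc)).2
        (by rw [hv]; simp) w hw
      simpa using this
    refine ⟨c, fun y hy => ?_⟩
    by_cases hyv : v = y
    · subst hyv; exact hc.symm
    have hna : ¬ G.Adj v y := fun ha => hy (huniq y ha)
    obtain ⟨w, h1, h2⟩ := common_of_dist G hG.1 v y (dist_le_of_eq G hG.1 v y (h v y) hyv hna)
    rw [huniq w h1] at h2
    exact h2
  · push Not at hl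
    have h2 : ∀ v ∈ (Finset.univ : Finset (Fin n)), 2 ≤ deg G v := fun v _ => by
      have := deg_pos' hn G hG.1 v
      have := hl v
      omega
    have hs := sum_deg G hG
    have heq := (Finset.sum_eq_sum_iff_of_le h2).1 (by rw [hs]; simp; ring)
    have : ∀ v, (deg G v : ℝ)^2 = 4 := fun v => by
      rw [← heq v (Finset.mem_univ _)]; norm_num
    simp_rw [this] at hsq
    simp at hsq
    have hn3 : n = 3 := by
      have e : ((n:ℝ) - 2) * (n - 3) = 0 := by linarith
      have : (3:ℝ) ≤ n := by exact_mod_cast hn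
      rcases mul_eq_zero.1 e with h | h
      · linarith
      · have : (n:ℝ) = 3 := by linarith
        exact_mod_cast this
    refine ⟨⟨0, by omega⟩, (dom_deg G _).2 ?_⟩
    rw [← heq _ (Finset.mem_univ _)]; omega

lemma dom_gh {n : ℕ} (G : SimpleGraph (Fin n)) (hG : G.Connected) (c : Fin n)
    (hc : Dom G c) (u v : Fin n) : gfun G u v = hfun G u v := by
  unfold gfun hfun
  split_ifs with h h'
  · rfl
  · rw [SimpleGraph.dist_eq_one_iff_adj.2 h']; simp
  · have h1 := dist_ge_two G hG u v h h'
    have huc : u ≠ c := fun e => h' (by subst e; exact hc v (Ne.symm h))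
    have hvc : v ≠ c := fun e => h' (by subst e; exact (hc u h).symm)
    have h2 := SimpleGraph.dist_le (SimpleGraph.Walk.cons (hc u huc).symm
      (SimpleGraph.Walk.cons (hc v hvc) SimpleGraph.Walk.nil))
    simp at h2
    have : G.dist u v = 2 := by omega
    rw [this]; simp

theorem stmt7 (n : ℕ) (hn : 3 ≤ n) (G : SimpleGraph (Fin n)) (hG : Unicyclic G) :
    HA G ≤ (3 / 2 : ℝ) * ((n : ℝ) ^ 2 - n + 2) ∧
      (HA G = (3 / 2 : ℝ) * ((n : ℝ) ^ 2 - n + 2) ↔ Nonempty (G ≃g cycleStar3 n)) := by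
  have hterm : ∀ u v, (deg G u : ℝ) * gfun G u v ≤ (deg G u : ℝ) * hfun G u v := fun u v =>
    mul_le_mul_of_nonneg_left (g_le_h G hG.1 u v) (by positivity)
  have hle1 : HA G ≤ (n:ℝ) * (n - 1) + (∑ u, (deg G u : ℝ)^2) / 2 := by
    rw [HA_eq, ← hT G hG]
    exact Finset.sum_le_sum fun u _ => Finset.sum_le_sum fun v _ => hterm u v
  have hle2 : ∑ u, (deg G u : ℝ)^2 ≤ (n:ℝ)^2 - n + 6 := by
    by_cases h : ∃ c, Dom G c
    · obtain ⟨c, hc⟩ := h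
      exact (dom_sq hn G hG c hc).le
    · push Not at h
      exact nondom_sq hn G hG h
  refine ⟨by linarith, fun h => ?_, fun ⟨e⟩ => ?_⟩
  · have hsq : ∑ u, (deg G u : ℝ)^2 = (n:ℝ)^2 - n + 6 := by linarith
    have hH : HA G = (n:ℝ) * (n - 1) + (∑ u, (deg G u : ℝ)^2) / 2 := by rw [hsq]; linarith
    rw [HA_eq, ← hT G hG] at hH
    have h1 := (Finset.sum_eq_sum_iff_of_le
      (fun u _ => Finset.sum_le_sum fun v _ => hterm u v)).1 hH
    have h2 : ∀ u v, gfun G u v = hfun G u v := by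
      intro u v
      have h3 := (Finset.sum_eq_sum_iff_of_le (fun v _ => hterm u v)).1
        (h1 u (Finset.mem_univ _)) v (Finset.mem_univ _)
      have h4 : (deg G u : ℝ) ≠ 0 := by
        have := deg_pos' hn G hG.1 u
        exact_mod_cast (by omega : deg G u ≠ 0)
      exact mul_left_cancel₀ h4 h3
    obtain ⟨c, hc⟩ := eq_dom hn G hG h2 hsq
    exact dom_iso hn G hG c hc
  · obtain ⟨c, hc⟩ := iso_dom hn G e
    have hT' := hT G hG
    rw [dom_sq hn G hG c hc] at hT'
    rw [HA_eq]
    simp_rw [dom_gh G hG.1 c hc]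
    rw [hT']; ring
end

section
/- For every unicyclic graph G on n vertices that is not a cycle-path graph, there exists a cycle-path graph G′ on n vertices with H_A(G) > H_A(G′). -/
open Finset SimpleGraph

namespace S15

lemma deg_eq_sum {V : Type*} [Fintype V] (G : SimpleGraph V) [DecidableRel G.Adj] (v : V) :
    (deg G v : ℝ) = ∑ u : V, if G.Adj v u then (1 : ℝ) else 0 := by
  classical
  unfold deg
  rw [Nat.card_eq_fintype_card, Fintype.card_subtype]
  simp

lemma deg_eq_degree {V : Type*} [Fintype V] (G : SimpleGraph V) [DecidableRel G.Adj] (v : V) :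
    deg G v = G.degree v := by
  classical
  unfold deg
  rw [Nat.card_eq_fintype_card, Fintype.card_subtype, ← card_neighborFinset_eq_degree]
  congr 1
  ext u
  simp

lemma handshake {V : Type*} [Fintype V] (G : SimpleGraph V) :
    ∑ v, deg G v = 2 * Nat.card G.edgeSet := by
  classical
  simp only [deg_eq_degree]
  rw [G.sum_degrees_eq_twice_card_edges, Nat.card_eq_fintype_card, edgeFinset_card]

lemma HA_eq {V : Type*} [Fintype V] (G : SimpleGraph V) :
    HA G = (1/2) * ∑ u : V, ∑ v : V, ((deg G u : ℝ) + deg G v) / (G.dist u v) := by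
  classical
  unfold HA
  congr 1
  refine Finset.sum_congr rfl fun u _ => Finset.sum_congr rfl fun v _ => ?_
  by_cases h : u = v
  · subst h; simp
  · simp [h]

lemma lipschitz {V : Type*} {G : SimpleGraph V} (φ : V → ℕ)
    (hφ : ∀ u v, G.Adj u v → φ v ≤ φ u + 1) (hc : G.Connected) (u v : V) :
    φ v ≤ φ u + G.dist u v := by
  obtain ⟨p, hp⟩ := hc.exists_walk_length_eq_dist u v
  rw [← hp]
  clear hp
  induction p with
  | nil => simp
  | cons h p ih =>
    have := hφ _ _ h
    simp only [Walk.length_cons]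
    omega

lemma adj_dist {V : Type*} {G : SimpleGraph V} (hc : G.Connected) (ρ : V) {u v : V}
    (h : G.Adj u v) : G.dist ρ v ≤ G.dist ρ u + 1 := by
  have := hc.dist_triangle (u := ρ) (v := u) (w := v)
  have h1 : G.dist u v = 1 := SimpleGraph.dist_eq_one_iff_adj.2 h
  omega

lemma exists_parent {V : Type*} {G : SimpleGraph V} (hc : G.Connected) (ρ v : V) (h : v ≠ ρ) :
    ∃ u, G.Adj v u ∧ G.dist ρ u + 1 = G.dist ρ v := by
  obtain ⟨p, hp⟩ := hc.exists_walk_length_eq_dist v ρ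
  cases p with
  | nil => exact absurd rfl h
  | cons hadj p =>
    rename_i u
    refine ⟨u, hadj, ?_⟩
    have h1 := adj_dist hc ρ hadj.symm
    have h2 : G.dist u ρ ≤ p.length := SimpleGraph.dist_le p
    simp only [Walk.length_cons] at hp
    rw [SimpleGraph.dist_comm] at h2
    rw [SimpleGraph.dist_comm] at hp
    omega

/-- weighted degree identity with extra edge ab. -/
def Ident {V : Type*} [Fintype V] [DecidableEq V] (G : SimpleGraph V) (ρ a b : V) : Prop :=
  ∀ f : ℕ → ℝ, ∑ v, (deg G v : ℝ) * f (G.dist ρ v) =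
    ∑ v ∈ Finset.univ.erase ρ, (f (G.dist ρ v) + f (G.dist ρ v - 1))
      + f (G.dist ρ a) + f (G.dist ρ b)

lemma sum_deg_mul {V : Type*} [Fintype V] [DecidableEq V] (G : SimpleGraph V) [DecidableRel G.Adj]
    (f : V → ℝ) :
    ∑ v, (deg G v : ℝ) * f v = ∑ e ∈ G.edgeFinset, ∑ v, if v ∈ e then f v else 0 := by
  rw [Finset.sum_comm]
  refine Finset.sum_congr rfl fun v _ => ?_
  rw [← Finset.sum_filter, Finset.sum_const, deg_eq_degree, ← card_incidenceFinset_eq_degree,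
    incidenceFinset_eq_filter, nsmul_eq_mul]

lemma sum_mem_pair {V : Type*} [Fintype V] [DecidableEq V] (f : V → ℝ) (x y : V) (h : x ≠ y) :
    (∑ v, if v ∈ s(x, y) then f v else 0) = f x + f y := by
  rw [← Finset.sum_filter]
  have : Finset.univ.filter (fun v => v ∈ s(x, y)) = {x, y} := by ext; simp
  rw [this, Finset.sum_pair h]

lemma ident_of_parent {V : Type*} [Fintype V] [DecidableEq V] (G : SimpleGraph V)
    (hG : Unicyclic G) (ρ a b : V) (p : V → V)
    (hp : ∀ v, v ≠ ρ → G.Adj v (p v) ∧ G.dist ρ (p v) + 1 = G.dist ρ v)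
    (hab : G.Adj a b) (he : ∀ v, v ≠ ρ → s(v, p v) ≠ s(a, b)) : Ident G ρ a b := by
  classical
  intro f
  have hinj : Set.InjOn (fun v => s(v, p v)) (Finset.univ.erase ρ : Finset V) := by
    intro x hx y hy hxy
    simp only [Finset.coe_erase, Finset.coe_univ, Set.mem_sdiff, Set.mem_univ, true_and,
      Set.mem_singleton_iff] at hx hy
    have h1 := (hp x hx).2
    have h2 := (hp y hy).2
    simp only [Sym2.eq_iff] at hxy
    rcases hxy with h | h
    · exact h.1
    · have h3 : G.dist ρ (p y) = G.dist ρ x := by rw [h.1]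
      have h4 : G.dist ρ (p x) = G.dist ρ y := by rw [h.2]
      omega
  have hE : G.edgeFinset = insert s(a, b) ((Finset.univ.erase ρ).image (fun v => s(v, p v))) := by
    symm
    apply Finset.eq_of_subset_of_card_le
    · intro e
      simp only [Finset.mem_insert, Finset.mem_image, Finset.mem_erase, Finset.mem_univ, and_true]
      rintro (rfl | ⟨v, hv, rfl⟩)
      · simpa using hab
      · simpa using (hp v hv).1
    · rw [Finset.card_insert_of_notMem, Finset.card_image_of_injOn hinj,
        Finset.card_erase_of_mem (Finset.mem_univ _), Finset.card_univ, edgeFinset_card,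
        ← Nat.card_eq_fintype_card, hG.2]
      · have : 0 < Fintype.card V := Fintype.card_pos_iff.2 ⟨ρ⟩
        omega
      · simp only [Finset.mem_image, Finset.mem_erase, Finset.mem_univ, and_true, not_exists,
          not_and]
        exact he
  rw [sum_deg_mul G (fun v => f (G.dist ρ v)), hE, Finset.sum_insert, Finset.sum_image hinj,
    sum_mem_pair _ _ _ hab.ne]
  · rw [add_comm, ← add_assoc]
    congr 2
    refine Finset.sum_congr rfl fun v hv => ?_
    have hv' : v ≠ ρ := Finset.ne_of_mem_erase hv
    rw [sum_mem_pair _ _ _ (hp v hv').1.ne]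
    have := (hp v hv').2
    congr 2
    omega
  · simp only [Finset.mem_image, Finset.mem_erase, Finset.mem_univ, and_true, not_exists,
          not_and]
    exact he

lemma ident_same {V : Type*} [Fintype V] [DecidableEq V] (G : SimpleGraph V)
    (hG : Unicyclic G) (ρ a b : V) (hab : G.Adj a b) (hd : G.dist ρ a = G.dist ρ b) :
    Ident G ρ a b := by
  have := fun v => exists_parent hG.1 ρ v
  have h' : ∀ v, ∃ u, v ≠ ρ → G.Adj v u ∧ G.dist ρ u + 1 = G.dist ρ v := by
    intro v
    by_cases h : v = ρ
    · exact ⟨v, fun h2 => absurd h h2⟩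
    · obtain ⟨u, hu⟩ := this v h
      exact ⟨u, fun _ => hu⟩
  choose p hp using h'
  refine ident_of_parent G hG ρ a b p hp hab ?_
  intro v hv h
  have := (hp v hv).2
  rw [Sym2.eq_iff] at h
  rcases h with ⟨h1, h2⟩ | ⟨h1, h2⟩ <;> rw [h1] at this h2 <;> rw [h2] at this <;> omega

lemma exists_ident {V : Type*} [Fintype V] [DecidableEq V] (G : SimpleGraph V)
    (hG : Unicyclic G) (ρ : V) : ∃ a b x y, G.Adj a b ∧ G.dist ρ a ≤ G.dist ρ b ∧
      G.dist ρ b ≤ G.dist ρ a + 1 ∧ Ident G ρ a b ∧ x ≠ y ∧ x ≠ ρ ∧ y ≠ ρ ∧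
      G.dist ρ x = G.dist ρ y := by
  classical
  have hzero : ∀ v, G.dist ρ v = 0 → v = ρ := fun v h => (hG.1.dist_eq_zero_iff.1 h).symm
  have aux : ∀ x y : V, x ≠ y → G.dist ρ x = G.dist ρ y → x ≠ ρ ∧ y ≠ ρ := by
    intro x y hxy hd
    constructor
    · rintro rfl
      rw [SimpleGraph.dist_self] at hd
      exact hxy (hzero y hd.symm).symm
    · rintro rfl
      rw [SimpleGraph.dist_self] at hd
      exact hxy (hzero x hd)
  have h' : ∀ v, ∃ u, v ≠ ρ → G.Adj v u ∧ G.dist ρ u + 1 = G.dist ρ v := by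
    intro v
    by_cases h : v = ρ
    · exact ⟨v, fun h2 => absurd h h2⟩
    · obtain ⟨u, hu⟩ := exists_parent hG.1 ρ v h
      exact ⟨u, fun _ => hu⟩
  choose p hp using h'
  have hlt : ((Finset.univ.erase ρ).image (fun v => s(v, p v))).card < G.edgeFinset.card := by
    refine lt_of_le_of_lt Finset.card_image_le ?_
    rw [Finset.card_erase_of_mem (Finset.mem_univ _), Finset.card_univ, edgeFinset_card,
        ← Nat.card_eq_fintype_card (α := G.edgeSet), hG.2]
    have : 0 < Fintype.card V := Fintype.card_pos_iff.2 ⟨ρ⟩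
    omega
  obtain ⟨e, heE, he⟩ := Finset.exists_mem_notMem_of_card_lt_card hlt
  have key : ∃ a b, s(a, b) = e ∧ G.dist ρ a ≤ G.dist ρ b := by
    induction e with
    | h a b =>
      rcases le_total (G.dist ρ a) (G.dist ρ b) with h | h
      · exact ⟨a, b, rfl, h⟩
      · exact ⟨b, a, Sym2.eq_swap, h⟩
  obtain ⟨a, b, rfl, hle⟩ := key
  have hab : G.Adj a b := by simpa using heE
  have he' : ∀ v, v ≠ ρ → s(v, p v) ≠ s(a, b) := by
    simpa using he
  have hle2 := adj_dist hG.1 ρ hab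
  have hI := ident_of_parent G hG ρ a b p hp hab he'
  by_cases hd : G.dist ρ a = G.dist ρ b
  · exact ⟨a, b, a, b, hab, hle, hle2, hI, hab.ne, (aux a b hab.ne hd).1, (aux a b hab.ne hd).2, hd⟩
  · have hb : b ≠ ρ := by
      rintro rfl
      rw [SimpleGraph.dist_self] at *
      omega
    have h2 := (hp b hb).2
    have hne : a ≠ p b := by
      intro h
      apply he' b hb
      rw [← h]; exact Sym2.eq_swap
    have hd2 : G.dist ρ a = G.dist ρ (p b) := by omega
    exact ⟨a, b, a, p b, hab, hle, hle2, hI, hne, (aux _ _ hne hd2).1, (aux _ _ hne hd2).2, hd2⟩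

/-- downward closed families -/
lemma down_le {V : Type*} [DecidableEq V] (d : V → ℕ) (s : Finset V)
    (h2 : ∀ x ∈ s, 2 ≤ d x → ∃ y ∈ s, d y + 1 = d x) (x : V) (hx : x ∈ s) :
    Finset.Icc 1 (d x) ⊆ s.image d := by
  have : ∀ k x, x ∈ s → d x = k → Finset.Icc 1 k ⊆ s.image d := by
    intro k
    induction k with
    | zero => intro x hx h; simp
    | succ k ih =>
      intro x hx h j hj
      rw [Finset.mem_Icc] at hj
      by_cases hjk : j = k + 1
      · exact Finset.mem_image.2 ⟨x, hx, by omega⟩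
      · obtain ⟨y, hy, hyd⟩ := h2 x hx (by omega)
        exact ih y hy (by omega) (Finset.mem_Icc.2 ⟨hj.1, by omega⟩)
  exact this _ x hx rfl

lemma down_le_card {V : Type*} [DecidableEq V] (d : V → ℕ) (s : Finset V)
    (h2 : ∀ x ∈ s, 2 ≤ d x → ∃ y ∈ s, d y + 1 = d x) (x : V) (hx : x ∈ s) :
    d x ≤ s.card := by
  have := Finset.card_le_card (down_le d s h2 x hx)
  have h3 := Finset.card_image_le (s := s) (f := d)
  simp at this
  omega

lemma down_sum {V : Type*} [DecidableEq V] (d : V → ℕ) (g : ℕ → ℝ)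
    (hg : ∀ i j, 1 ≤ i → i ≤ j → g j ≤ g i) (N : ℕ) : ∀ (s : Finset V), s.card = N →
    (∀ x ∈ s, 1 ≤ d x) → (∀ x ∈ s, 2 ≤ d x → ∃ y ∈ s, d y + 1 = d x) →
    ∑ k ∈ Finset.range N, g (k + 1) ≤ ∑ x ∈ s, g (d x) := by
  induction N with
  | zero => intro s hs _ _; rw [Finset.card_eq_zero] at hs; simp [hs]
  | succ N ih =>
    intro s hs h1 h2
    have hne : s.Nonempty := by rw [← Finset.card_pos]; omega
    obtain ⟨x, hx, hmax⟩ := Finset.exists_max_image s d hne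
    rw [Finset.sum_range_succ, ← Finset.sum_erase_add s _ hx]
    have hle := down_le_card d s h2 x hx
    refine add_le_add (ih (s.erase x) ?_ ?_ ?_) ?_
    · rw [Finset.card_erase_of_mem hx]; omega
    · intro y hy; exact h1 y (Finset.mem_of_mem_erase hy)
    · intro y hy hy2
      obtain ⟨z, hz, hzd⟩ := h2 y (Finset.mem_of_mem_erase hy) hy2
      refine ⟨z, Finset.mem_erase.2 ⟨?_, hz⟩, hzd⟩
      rintro rfl
      have := hmax y (Finset.mem_of_mem_erase hy)
      omega
    · exact hg _ _ (h1 x hx) (by omega)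

lemma erase_down {V : Type*} [Fintype V] [DecidableEq V] (G : SimpleGraph V) (hc : G.Connected)
    (ρ x y : V) (hxy : x ≠ y) (hyρ : y ≠ ρ) (hd : G.dist ρ x = G.dist ρ y) :
    (∀ z ∈ (Finset.univ.erase ρ).erase x, 1 ≤ G.dist ρ z) ∧
    (∀ z ∈ (Finset.univ.erase ρ).erase x, 2 ≤ G.dist ρ z →
      ∃ u ∈ (Finset.univ.erase ρ).erase x, G.dist ρ u + 1 = G.dist ρ z) := by
  constructor
  · intro z hz
    simp only [Finset.mem_erase, Finset.mem_univ, and_true] at hz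
    exact hc.pos_dist_of_ne (Ne.symm hz.2)
  · intro z hz h2
    simp only [Finset.mem_erase, Finset.mem_univ, and_true] at hz ⊢
    obtain ⟨u, hu, hud⟩ := exists_parent hc ρ z hz.2
    by_cases hux : u = x
    · exact ⟨y, ⟨hxy.symm, hyρ⟩, by rw [← hd, ← hux]; exact hud⟩
    · refine ⟨u, ⟨hux, ?_⟩, hud⟩
      rintro rfl
      rw [SimpleGraph.dist_self] at hud
      omega

lemma dist_bound {V : Type*} [Fintype V] [DecidableEq V] (G : SimpleGraph V) (hc : G.Connected)
    (ρ x y : V) (hxy : x ≠ y) (hxρ : x ≠ ρ) (hyρ : y ≠ ρ) (hd : G.dist ρ x = G.dist ρ y) :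
    3 ≤ Fintype.card V ∧ ∀ z, G.dist ρ z ≤ Fintype.card V - 2 := by
  obtain ⟨h1, h2⟩ := erase_down G hc ρ x y hxy hyρ hd
  have hcard : ((Finset.univ.erase ρ).erase x).card = Fintype.card V - 2 := by
    rw [Finset.card_erase_of_mem (by simp [hxρ]), Finset.card_erase_of_mem (by simp),
      Finset.card_univ]
    omega
  have hb : ∀ z, z ≠ ρ → z ≠ x → G.dist ρ z ≤ Fintype.card V - 2 := by
    intro z hz hzx
    rw [← hcard]
    exact down_le_card _ _ h2 z (by simp [hz, hzx])
  constructor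
  · have : 0 < ((Finset.univ.erase ρ).erase x).card :=
      Finset.card_pos.2 ⟨y, by simp [hxy.symm, hyρ]⟩
    omega
  · intro z
    by_cases hz : z = ρ
    · subst hz; simp
    · by_cases hzx : z = x
      · rw [hzx, hd]; exact hb y hyρ hxy.symm
      · exact hb z hz hzx

lemma sum_low {V : Type*} [Fintype V] [DecidableEq V] (G : SimpleGraph V) (hc : G.Connected)
    (ρ x y : V) (hxy : x ≠ y) (hxρ : x ≠ ρ) (hyρ : y ≠ ρ) (hd : G.dist ρ x = G.dist ρ y)
    (g : ℕ → ℝ) (hg : ∀ i j, 1 ≤ i → i ≤ j → g j ≤ g i) :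
    ∑ k ∈ Finset.range (Fintype.card V - 2), g (k + 1) + g (Fintype.card V - 2)
      ≤ ∑ z ∈ Finset.univ.erase ρ, g (G.dist ρ z) := by
  obtain ⟨h1, h2⟩ := erase_down G hc ρ x y hxy hyρ hd
  have hcard : ((Finset.univ.erase ρ).erase x).card = Fintype.card V - 2 := by
    rw [Finset.card_erase_of_mem (by simp [hxρ]), Finset.card_erase_of_mem (by simp),
      Finset.card_univ]
    omega
  rw [← Finset.sum_erase_add (Finset.univ.erase ρ) _ (show x ∈ _ by simp [hxρ])]
  refine add_le_add (down_sum _ g hg _ _ hcard h1 h2) (hg _ _ ?_ ?_)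
  · exact hc.pos_dist_of_ne (Ne.symm hxρ)
  · exact (dist_bound G hc ρ x y hxy hxρ hyρ hd).2 x

/-- the extremal case: layers are singletons except the last one. -/
lemma layers {V : Type*} [Fintype V] [DecidableEq V] (G : SimpleGraph V) (hc : G.Connected)
    (ρ a b : V) (hab : a ≠ b) (haρ : a ≠ ρ) (hbρ : b ≠ ρ) (hda : G.dist ρ a = Fintype.card V - 2)
    (hdb : G.dist ρ b = Fintype.card V - 2) (g : ℕ → ℝ) :
    ∑ z ∈ Finset.univ.erase ρ, g (G.dist ρ z) =
      ∑ k ∈ Finset.range (Fintype.card V - 2), g (k + 1) + g (Fintype.card V - 2) := by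
  have hd : G.dist ρ a = G.dist ρ b := by rw [hda, hdb]
  obtain ⟨h1, h2⟩ := erase_down G hc ρ a b hab hbρ hd
  have hcard : ((Finset.univ.erase ρ).erase a).card = Fintype.card V - 2 := by
    rw [Finset.card_erase_of_mem (by simp [haρ]), Finset.card_erase_of_mem (by simp),
      Finset.card_univ]
    omega
  have hsub := down_le _ _ h2 b (by simp [hab.symm, hbρ])
  rw [hdb] at hsub
  have himg : Finset.Icc 1 (Fintype.card V - 2) =
      ((Finset.univ.erase ρ).erase a).image (fun z => G.dist ρ z) := by
    apply Finset.eq_of_subset_of_card_le hsub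
    refine Finset.card_image_le.trans ?_
    simp [hcard]
  have hinj : Set.InjOn (fun z => G.dist ρ z) ((Finset.univ.erase ρ).erase a : Finset V) := by
    apply Finset.injOn_of_card_image_eq
    rw [← himg, hcard]; simp
  rw [← Finset.sum_erase_add (Finset.univ.erase ρ) _ (show a ∈ _ by simp [haρ]), hda]
  congr 1
  rw [← Finset.sum_image (f := g) hinj, ← himg, Finset.range_eq_Ico, Finset.sum_Ico_add' g 0 _ 1]
  rfl


/-- G is H with a pendant vertex ℓ attached at w. -/
structure LeafExt {m : ℕ} (G : SimpleGraph (Fin (m + 1))) (ℓ : Fin (m + 1))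
    (H : SimpleGraph (Fin m)) (w : Fin m) : Prop where
  adj : ∀ x y, G.Adj (ℓ.succAbove x) (ℓ.succAbove y) ↔ H.Adj x y
  leaf : ∀ x, G.Adj ℓ (ℓ.succAbove x) ↔ x = w

section
variable {m : ℕ} {G : SimpleGraph (Fin (m + 1))} {ℓ : Fin (m + 1)}
    {H : SimpleGraph (Fin m)} {w : Fin m}

lemma LeafExt.deg_leaf (h : LeafExt G ℓ H w) : deg G ℓ = 1 := by
  classical
  have : (deg G ℓ : ℝ) = 1 := by
    rw [deg_eq_sum, Fin.sum_univ_succAbove _ ℓ]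
    simp [h.leaf]
  exact_mod_cast this

lemma LeafExt.deg_other (h : LeafExt G ℓ H w) (x : Fin m) :
    deg G (ℓ.succAbove x) = deg H x + if x = w then 1 else 0 := by
  classical
  have : (deg G (ℓ.succAbove x) : ℝ) = deg H x + if x = w then 1 else 0 := by
    rw [deg_eq_sum, Fin.sum_univ_succAbove _ ℓ, deg_eq_sum]
    simp only [h.adj, G.adj_comm _ ℓ, h.leaf]
    ring
  split_ifs at this ⊢ <;> exact_mod_cast this

lemma LeafExt.edges (h : LeafExt G ℓ H w) :
    Nat.card G.edgeSet = Nat.card H.edgeSet + 1 := by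
  have h1 := handshake G
  have h2 := handshake H
  rw [Fin.sum_univ_succAbove _ ℓ, h.deg_leaf] at h1
  simp only [h.deg_other, Finset.sum_add_distrib, Finset.sum_ite_eq', Finset.mem_univ,
    if_true] at h1
  omega

lemma LeafExt.conn_up (h : LeafExt G ℓ H w) (hc : H.Connected) : G.Connected := by
  have hw : G.Adj ℓ (ℓ.succAbove w) := (h.leaf w).2 rfl
  rw [connected_iff_exists_forall_reachable]
  refine ⟨ℓ, fun v => ?_⟩
  induction v using Fin.succAboveCases ℓ with
  | x => exact Reachable.refl _
  | p x =>
    refine hw.reachable.trans ?_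
    have := (hc.preconnected w x).map (⟨ℓ.succAbove, fun {a b} hab => (h.adj a b).2 hab⟩ : H →g G)
    exact this

lemma LeafExt.conn_down (h : LeafExt G ℓ H w) (hc : G.Connected) : H.Connected := by
  rw [connected_iff_exists_forall_reachable]
  refine ⟨w, fun x => ?_⟩
  let r : Fin (m + 1) → Fin m := Fin.succAboveCases ℓ w (fun x => x)
  have hr : ∀ x, r (ℓ.succAbove x) = x := fun x => by simp [r]
  have hrl : r ℓ = w := by simp [r]
  have key : ∀ u v : Fin (m+1), G.Walk u v → H.Reachable (r u) (r v) := by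
    intro u v p
    induction p with
    | nil => exact Reachable.refl _
    | cons hadj p ih =>
      refine Reachable.trans ?_ ih
      rename_i a b c
      clear ih p
      induction a using Fin.succAboveCases ℓ with
      | x =>
        induction b using Fin.succAboveCases ℓ with
        | x => exact Reachable.refl _
        | p b => rw [h.leaf] at hadj; rw [hrl, hr, hadj]
      | p a =>
        induction b using Fin.succAboveCases ℓ with
        | x => rw [G.adj_comm, h.leaf] at hadj; rw [hrl, hr, hadj]
        | p b => rw [hr, hr]; exact ((h.adj a b).1 hadj).reachable
  obtain ⟨p⟩ := hc.preconnected (ℓ.succAbove w) (ℓ.succAbove x)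
  have := key _ _ p
  rwa [hr, hr] at this

lemma LeafExt.uni_up (h : LeafExt G ℓ H w) (hH : Unicyclic H) : Unicyclic G := by
  refine ⟨h.conn_up hH.1, ?_⟩
  rw [h.edges, hH.2]; simp

lemma LeafExt.uni_down (h : LeafExt G ℓ H w) (hG : Unicyclic G) : Unicyclic H := by
  refine ⟨h.conn_down hG.1, ?_⟩
  have := hG.2
  rw [h.edges] at this
  simpa using this

lemma LeafExt.dist_other (h : LeafExt G ℓ H w) (hc : H.Connected) (x y : Fin m) :
    G.dist (ℓ.succAbove x) (ℓ.succAbove y) = H.dist x y := by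
  apply le_antisymm
  · obtain ⟨p, hp⟩ := hc.exists_walk_length_eq_dist x y
    rw [← hp, ← Walk.length_map (⟨ℓ.succAbove, fun {a b} hab => (h.adj a b).2 hab⟩ : H →g G)]
    exact SimpleGraph.dist_le _
  · let r : Fin (m + 1) → ℕ := Fin.succAboveCases ℓ (H.dist x w) (fun z => H.dist x z)
    have hr : ∀ z, r (ℓ.succAbove z) = H.dist x z := fun z => by simp [r]
    have hrl : r ℓ = H.dist x w := by simp [r]
    have := lipschitz r ?_ (h.conn_up hc) (ℓ.succAbove x) (ℓ.succAbove y)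
    · rw [hr, hr, SimpleGraph.dist_self] at this
      omega
    · intro a b hadj
      induction a using Fin.succAboveCases ℓ with
      | x =>
        induction b using Fin.succAboveCases ℓ with
        | x => omega
        | p b => rw [h.leaf] at hadj; rw [hrl, hr, hadj]; omega
      | p a =>
        induction b using Fin.succAboveCases ℓ with
        | x => rw [G.adj_comm, h.leaf] at hadj; rw [hrl, hr, hadj]; omega
        | p b => rw [hr, hr]; exact adj_dist hc x ((h.adj a b).1 hadj)

lemma LeafExt.dist_leaf (h : LeafExt G ℓ H w) (hc : H.Connected) (x : Fin m) :
    G.dist ℓ (ℓ.succAbove x) = H.dist w x + 1 := by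
  apply le_antisymm
  · have := (h.conn_up hc).dist_triangle (u := ℓ) (v := ℓ.succAbove w) (w := ℓ.succAbove x)
    rw [h.dist_other hc, SimpleGraph.dist_eq_one_iff_adj.2 ((h.leaf w).2 rfl)] at this
    omega
  · let r : Fin (m + 1) → ℕ := Fin.succAboveCases ℓ 0 (fun z => H.dist w z + 1)
    have hr : ∀ z, r (ℓ.succAbove z) = H.dist w z + 1 := fun z => by simp [r]
    have hrl : r ℓ = 0 := by simp [r]
    have := lipschitz r ?_ (h.conn_up hc) ℓ (ℓ.succAbove x)
    · rw [hr, hrl] at this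
      omega
    · intro a b hadj
      induction a using Fin.succAboveCases ℓ with
      | x =>
        induction b using Fin.succAboveCases ℓ with
        | x => omega
        | p b => rw [h.leaf] at hadj; rw [hrl, hr, hadj, SimpleGraph.dist_self]
      | p a =>
        induction b using Fin.succAboveCases ℓ with
        | x => rw [hrl]; omega
        | p b => rw [hr, hr]; have := adj_dist hc w ((h.adj a b).1 hadj); omega

/-- the increment -/
lemma LeafExt.HA_eq (h : LeafExt G ℓ H w) (hH : Unicyclic H) (a b : Fin m)
    (hI : Ident H w a b) :
    HA G = HA H + (2 + (2 * ∑ x ∈ Finset.univ.erase w, (1 : ℝ) / (H.dist w x + 1)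
      + 2 * ∑ x ∈ Finset.univ.erase w, (1 : ℝ) / (H.dist w x))
      + 1 / ((H.dist w a : ℝ) + 1) + 1 / ((H.dist w b : ℝ) + 1)) := by
  classical
  have hc := hH.1
  rw [S15.HA_eq G, S15.HA_eq H, Fin.sum_univ_succAbove _ ℓ]
  simp only [Fin.sum_univ_succAbove _ ℓ, h.dist_other hc, h.dist_leaf hc, h.deg_leaf,
    G.dist_comm (v := ℓ), h.deg_other, SimpleGraph.dist_self]
  have hI1 := hI (fun k => 1 / ((k : ℝ) + 1))
  have e1 : ∀ x ∈ Finset.univ.erase w, (((1 : ℝ) / (((H.dist w x : ℕ) : ℝ) + 1)) +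
      1 / (((H.dist w x - 1 : ℕ) : ℝ) + 1)) = 1 / ((H.dist w x : ℝ) + 1) + 1 / (H.dist w x : ℝ) := by
    intro x hx
    have : 0 < H.dist w x := hc.pos_dist_of_ne (Finset.ne_of_mem_erase hx).symm
    rw [Nat.cast_sub this]; simp
  rw [Finset.sum_congr rfl e1, Finset.sum_add_distrib] at hI1
  -- sums over all x
  have s1 : ∑ x, (1 : ℝ) / (H.dist w x + 1) = 1 + ∑ x ∈ Finset.univ.erase w, (1 : ℝ) / (H.dist w x + 1) := by
    rw [← Finset.add_sum_erase _ _ (Finset.mem_univ w)]; simp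
  have s2 : ∑ x, (1 : ℝ) / (H.dist w x) = ∑ x ∈ Finset.univ.erase w, (1 : ℝ) / (H.dist w x) := by
    rw [← Finset.add_sum_erase _ _ (Finset.mem_univ w)]; simp
  have s3 : ∑ x, ((1 : ℕ) + ((deg H x + if x = w then 1 else 0 : ℕ) : ℝ)) / ((H.dist w x + 1 : ℕ) : ℝ)
      = ∑ x, (1 : ℝ) / (H.dist w x + 1) + ∑ x, (deg H x : ℝ) * (1 / ((H.dist w x : ℝ) + 1)) + 1 := by
    have : ∑ x, (if x = w then (1 : ℝ) else 0) = 1 := by simp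
    rw [← Finset.sum_add_distrib]
    refine Eq.trans (b := ∑ x, (((1 : ℝ) / (H.dist w x + 1) +
      (deg H x : ℝ) * (1 / ((H.dist w x : ℝ) + 1))) + if x = w then (1 : ℝ) else 0)) ?_
      (by rw [Finset.sum_add_distrib, this])
    refine Finset.sum_congr rfl fun x _ => ?_
    split_ifs with hx
    · subst hx; simp; ring
    · push_cast; ring
  have s3' : ∑ x, (((deg H x + if x = w then 1 else 0 : ℕ) : ℝ) + (1 : ℕ)) / ((H.dist w x + 1 : ℕ) : ℝ)
      = ∑ x, (1 : ℝ) / (H.dist w x + 1) + ∑ x, (deg H x : ℝ) * (1 / ((H.dist w x : ℝ) + 1)) + 1 := by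
    rw [← s3]
    refine Finset.sum_congr rfl fun x _ => ?_
    rw [add_comm]
  have s4 : ∑ x, ∑ y, (((deg H x + if x = w then 1 else 0 : ℕ) : ℝ) +
      ((deg H y + if y = w then 1 else 0 : ℕ) : ℝ)) / (H.dist x y : ℝ)
      = ∑ x, ∑ y, ((deg H x : ℝ) + deg H y) / (H.dist x y : ℝ) + 2 * ∑ x, (1 : ℝ) / (H.dist w x) := by
    have a1 : ∑ x, (1 : ℝ) / (H.dist w x) =
        ∑ x, ∑ y, (if x = w then (1 : ℝ) else 0) / (H.dist x y : ℝ) := by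
      symm
      rw [Finset.sum_eq_single w]
      · simp
      · intro x _ hx; simp [hx]
      · simp
    have a2 : ∑ x, (1 : ℝ) / (H.dist w x) =
        ∑ x, ∑ y, (if y = w then (1 : ℝ) else 0) / (H.dist x y : ℝ) := by
      rw [a1, Finset.sum_comm]
      refine Finset.sum_congr rfl fun x _ => Finset.sum_congr rfl fun y _ => ?_
      rw [H.dist_comm]
    rw [two_mul]
    nth_rewrite 1 [a1]
    rw [a2, ← Finset.sum_add_distrib, ← Finset.sum_add_distrib]
    refine Finset.sum_congr rfl fun x _ => ?_
    rw [← Finset.sum_add_distrib, ← Finset.sum_add_distrib]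
    refine Finset.sum_congr rfl fun y _ => ?_
    push_cast
    ring
  rw [Finset.sum_add_distrib, s3, s3', s4, s1, s2, hI1]
  simp only [Nat.cast_zero, div_zero]
  ring

end

/-- every leaf gives a leaf extension -/
lemma exists_leafExt {m : ℕ} (G : SimpleGraph (Fin (m + 1))) (ℓ : Fin (m + 1))
    (h : deg G ℓ = 1) : ∃ H : SimpleGraph (Fin m), ∃ w, LeafExt G ℓ H w := by
  unfold deg at h
  rw [Nat.card_eq_one_iff_unique] at h
  obtain ⟨h1, ⟨u, hu⟩⟩ := h
  have hne : u ≠ ℓ := hu.ne.symm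
  obtain ⟨w, rfl⟩ := Fin.exists_succAbove_eq hne
  refine ⟨G.comap ℓ.succAbove, w, fun x y => Iff.rfl, fun x => ⟨fun hx => ?_, ?_⟩⟩
  · have := h1.elim ⟨_, hx⟩ ⟨_, hu⟩
    simpa using this
  · rintro rfl; exact hu

lemma add_leaf {m : ℕ} (H : SimpleGraph (Fin m)) (w : Fin m) :
    ∃ G : SimpleGraph (Fin (m + 1)), LeafExt G 0 H w := by
  refine ⟨SimpleGraph.fromRel (fun i j => (∃ x y, i = Fin.succ x ∧ j = Fin.succ y ∧ H.Adj x y) ∨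
    (i = 0 ∧ j = w.succ)), ?_, ?_⟩
  · intro x y
    simp only [Fin.zero_succAbove, SimpleGraph.fromRel_adj]
    constructor
    · rintro ⟨hne, (⟨a, b, h1, h2, h3⟩ | h) | (⟨a, b, h1, h2, h3⟩ | h)⟩
      · rwa [Fin.succ_injective _ h1, Fin.succ_injective _ h2]
      · exact absurd h.1 (Fin.succ_ne_zero _)
      · rw [Fin.succ_injective _ h1, Fin.succ_injective _ h2]; exact h3.symm
      · exact absurd h.1 (Fin.succ_ne_zero _)
    · intro h
      exact ⟨fun h2 => h.ne (Fin.succ_injective _ h2), Or.inl (Or.inl ⟨x, y, rfl, rfl, h⟩)⟩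
  · intro x
    simp only [Fin.zero_succAbove, SimpleGraph.fromRel_adj]
    constructor
    · rintro ⟨hne, (⟨a, b, h1, h2, h3⟩ | h) | (⟨a, b, h1, h2, h3⟩ | h)⟩
      · exact absurd h1.symm (Fin.succ_ne_zero _)
      · exact Fin.succ_injective _ h.2
      · exact absurd h2.symm (Fin.succ_ne_zero _)
      · exact absurd h.1 (Fin.succ_ne_zero _)
    · rintro rfl
      exact ⟨(Fin.succ_ne_zero _).symm, by simp⟩


lemma harm_succ (k : ℕ) : harmonicNum (k + 1) = harmonicNum k + 1 / ((k : ℝ) + 1) := by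
  unfold harmonicNum
  rw [Finset.sum_range_succ]

lemma harm_double (m : ℕ) : harmonicNum (2 * m) - harmonicNum m ≤ m / ((m : ℝ) + 1) := by
  induction m with
  | zero => simp
  | succ m ih =>
    rw [show 2 * (m + 1) = 2 * m + 1 + 1 by ring, harm_succ, harm_succ, harm_succ]
    push_cast
    have h0 : (0 : ℝ) ≤ m := Nat.cast_nonneg m
    have e : ((m : ℝ) + 1) / (m + 1 + 1) - m / (m + 1)
        - (1 / (2 * m + 1) + 1 / (2 * m + 1 + 1) - 1 / (m + 1))
        = 3 * m / ((m + 1) * (m + 2) * (2 * m + 1) * 2) := by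
      field_simp
      ring
    have : (0 : ℝ) ≤ 3 * m / ((m + 1) * (m + 2) * (2 * m + 1) * 2) := by positivity
    linarith

/-- minimal increment from j+3 to j+4 vertices -/
noncomputable def incr (j : ℕ) : ℝ :=
  2 + (2 * (∑ k ∈ Finset.range (j + 1), (1 : ℝ) / (((k + 1 : ℕ) : ℝ) + 1) + 1 / (((j + 1 : ℕ) : ℝ) + 1))
    + 2 * (∑ k ∈ Finset.range (j + 1), (1 : ℝ) / ((k + 1 : ℕ) : ℝ) + 1 / ((j + 1 : ℕ) : ℝ)))
    + 1 / (((j + 1 : ℕ) : ℝ) + 1) + 1 / (((j + 1 : ℕ) : ℝ) + 1)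

lemma incr_eq (j : ℕ) : incr j = 4 * harmonicNum (j + 1) + 6 / ((j : ℝ) + 2) + 2 / ((j : ℝ) + 1) := by
  have h1 : ∑ k ∈ Finset.range (j + 1), (1 : ℝ) / ((k + 1 : ℕ) : ℝ) = harmonicNum (j + 1) := by
    simp [harmonicNum]
  have h2 : ∑ k ∈ Finset.range (j + 1), (1 : ℝ) / (((k + 1 : ℕ) : ℝ) + 1) =
      harmonicNum (j + 2) - 1 := by
    unfold harmonicNum
    rw [Finset.sum_range_succ' _ (j + 1)]
    simp
  unfold incr
  rw [h1, h2, harm_succ (j + 1)]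
  push_cast
  have h0 : (0 : ℝ) ≤ j := Nat.cast_nonneg j
  field_simp
  ring

noncomputable def Lv : ℕ → ℝ
  | 0 => 12
  | j + 1 => Lv j + incr j

lemma Lv_succ (j : ℕ) : Lv (j + 1) = Lv j + incr j := rfl

lemma harm_one : harmonicNum 1 = 1 := by simp [harmonicNum]

lemma odd_bound (t : ℕ) : Lv (2 * t) ≤ 4 * (2 * t + 3) * harmonicNum (t + 1) := by
  induction t with
  | zero => simp [Lv, harmonicNum]; norm_num
  | succ t ih =>
    rw [show 2 * (t + 1) = 2 * t + 1 + 1 by ring, Lv_succ, Lv_succ, incr_eq, incr_eq,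
      harm_succ (2 * t + 1), harm_succ (t + 1)]
    have hd := harm_double (t + 1)
    rw [show 2 * (t + 1) = 2 * t + 1 + 1 by ring, harm_succ (2 * t + 1)] at hd
    push_cast at hd ⊢
    have h0 : (0 : ℝ) ≤ t := Nat.cast_nonneg t
    set A := harmonicNum (2 * t + 1)
    set B := harmonicNum (t + 1)
    set x : ℝ := (t : ℝ)
    -- need: incr sum ≤ difference
    have e : 8 + 8 * (B) + 4 / (x + 2) - (8 * (A + 1 / (2 * x + 1 + 1)) + 2 / (x + 1) + 6 / (2 * x + 3) + 2 / (2 * x + 1))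
       ≥ 0 := by
      have : 8 - 8 * ((x + 1) / (x + 1 + 1)) + 4 / (x + 2) - (2 / (x + 1) + 6 / (2 * x + 3) + 2 / (2 * x + 1)) ≥ 0 := by
        have : 8 - 8 * ((x + 1) / (x + 1 + 1)) + 4 / (x + 2) - (2 / (x + 1) + 6 / (2 * x + 3) + 2 / (2 * x + 1))
          = (12 * (x + 1) * (2 * x + 3) * (2 * x + 1) - (x + 2) * (2 * (2 * x + 3) * (2 * x + 1) + 6 * (x + 1) * (2 * x + 1) + 2 * (x + 1) * (2 * x + 3))) / ((x + 2) * (x + 1) * (2 * x + 3) * (2 * x + 1)) := by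
          field_simp
          ring
        rw [this]
        apply div_nonneg _ (by positivity)
        nlinarith [mul_nonneg h0 h0, mul_nonneg (mul_nonneg h0 h0) h0]
      linarith
    have e2 : 4 * (2 * (x + 1) + 3) * (B + 1 / (x + 1 + 1)) = 4 * (2 * x + 3) * B + (8 + 8 * B + 4 / (x + 2)) := by
      field_simp
      ring
    have e3 : 4 * A + 6 / (2 * x + 2) + 2 / (2 * x + 1) + (4 * (A + 1 / (2 * x + 1 + 1)) + 6 / (2 * x + 1 + 2) + 2 / (2 * x + 1 + 1))
       = (8 * (A + 1 / (2 * x + 1 + 1)) + 2 / (x + 1) + 6 / (2 * x + 3) + 2 / (2 * x + 1)) := by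
      field_simp
      ring
    rw [e2]
    linarith

lemma Lv_two : Lv 2 = 30 := by
  rw [Lv_succ, Lv_succ, incr_eq, incr_eq]
  simp [Lv, harmonicNum, Finset.sum_range_succ]
  norm_num

lemma even_bound (t : ℕ) : Lv (2 * t + 3) ≤ 8 * (t + 3) * harmonicNum (t + 3) - 4 := by
  induction t with
  | zero =>
    simp only [Nat.mul_zero, Nat.zero_add]
    rw [Lv_succ, Lv_two, incr_eq]
    simp [harmonicNum, Finset.sum_range_succ]
    norm_num
  | succ t ih =>
    rw [show 2 * (t + 1) + 3 = 2 * t + 3 + 1 + 1 by ring, Lv_succ, Lv_succ, incr_eq, incr_eq,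
      show t + 1 + 3 = t + 3 + 1 by ring,
      harm_succ (2 * t + 3 + 1), harm_succ (t + 3)]
    have hd := harm_double (t + 3)
    rw [show 2 * (t + 3) = 2 * t + 3 + 1 + 1 + 1 by ring, harm_succ (2 * t + 3 + 1 + 1),
      harm_succ (2 * t + 3 + 1)] at hd
    push_cast at hd ⊢
    have h0 : (0 : ℝ) ≤ t := Nat.cast_nonneg t
    set A := harmonicNum (2 * t + 3 + 1)
    set B := harmonicNum (t + 3)
    set x : ℝ := (t : ℝ)
    have e2 : 8 * (x + 1 + 3) * (B + 1 / (x + 3 + 1)) = 8 * (x + 3) * B + (8 + 8 * B) := by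
      field_simp
      ring
    rw [e2]
    have e3 : 4 * A + 6 / (2 * x + 3 + 2) + 2 / (2 * x + 3 + 1) + (4 * (A + 1 / (2 * x + 3 + 1 + 1)) + 6 / (2 * x + 4 + 2) + 2 / (2 * x + 4 + 1))
       = 8 * (A + 1 / (2 * x + 3 + 1 + 1) + 1 / (2 * x + 3 + 1 + 1 + 1)) + (4 / (2 * x + 5) + 1 / (x + 2) - 1 / (x + 3)) := by
      field_simp
      ring
    have : 8 - 8 * ((x + 3) / (x + 3 + 1)) - (4 / (2 * x + 5) + 1 / (x + 2) - 1 / (x + 3)) ≥ 0 := by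
      have : 8 - 8 * ((x + 3) / (x + 3 + 1)) - (4 / (2 * x + 5) + 1 / (x + 2) - 1 / (x + 3))
        = (8 * (2 * x + 5) * (x + 2) * (x + 3) - (x + 4) * (4 * (x + 2) * (x + 3) + (2 * x + 5))) / ((x + 4) * (2 * x + 5) * (x + 2) * (x + 3)) := by
        field_simp
        ring
      rw [this]
      apply div_nonneg _ (by positivity)
      nlinarith [mul_nonneg h0 h0, mul_nonneg (mul_nonneg h0 h0) h0]
    linarith

lemma cyc_bound (j : ℕ) (hj : j ≠ 1) :
    Lv j ≤ 2 * ((j + 3 : ℕ) : ℝ) * (harmonicNum ((j + 3 - 1) / 2) + harmonicNum ((j + 3) / 2)) := by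
  rcases Nat.even_or_odd' j with ⟨t, rfl | rfl⟩
  · rw [show (2 * t + 3 - 1) / 2 = t + 1 by omega, show (2 * t + 3) / 2 = t + 1 by omega]
    have := odd_bound t
    push_cast
    linarith
  · obtain ⟨s, rfl⟩ : ∃ s, t = s + 1 := ⟨t - 1, by omega⟩
    rw [show (2 * (s + 1) + 1 + 3 - 1) / 2 = s + 2 by omega,
      show (2 * (s + 1) + 1 + 3) / 2 = s + 3 by omega, show 2 * (s + 1) + 1 = 2 * s + 3 by ring]
    have := even_bound s
    have h0 : (0 : ℝ) ≤ s := Nat.cast_nonneg s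
    rw [harm_succ (s + 2)] at this ⊢
    push_cast at this ⊢
    have e : (2 : ℝ) * (2 * s + 3 + 3) * (harmonicNum (s + 2) + (harmonicNum (s + 2) + 1 / (s + 2 + 1)))
      = 8 * (s + 3) * (harmonicNum (s + 2) + 1 / (s + 2 + 1)) - 4 := by
      field_simp
      ring
    rw [e]; exact this


lemma reg_sum {V : Type*} [Fintype V] [DecidableEq V] (G : SimpleGraph V) (hG : Unicyclic G)
    (hr : ∀ v, deg G v = 2) (ρ : V) (g : ℕ → ℝ) :
    ∑ v ∈ Finset.univ.erase ρ, g (G.dist ρ v) =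
      ∑ k ∈ Finset.range ((Fintype.card V - 1) / 2), g (k + 1) +
      ∑ k ∈ Finset.range (Fintype.card V / 2), g (k + 1) := by
  obtain ⟨a, b, x, y, hab, h1, h2, hI, -⟩ := exists_ident G hG ρ
  have key : ∀ g : ℕ → ℝ, ∑ v ∈ Finset.univ.erase ρ, g (G.dist ρ v) =
      ∑ k ∈ Finset.range (G.dist ρ a), g (k + 1) +
      ∑ k ∈ Finset.range (G.dist ρ b), g (k + 1) := by
    intro g
    have := hI (fun n => ∑ k ∈ Finset.range n, g (k + 1))
    rw [← Finset.add_sum_erase _ _ (Finset.mem_univ ρ)] at this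
    simp only [hr, SimpleGraph.dist_self, Finset.range_zero, Finset.sum_empty, mul_zero,
      zero_add] at this
    have e : ∑ v ∈ Finset.univ.erase ρ, g (G.dist ρ v) =
        ∑ v ∈ Finset.univ.erase ρ, ((2 : ℕ) : ℝ) * ∑ k ∈ Finset.range (G.dist ρ v), g (k + 1)
        - ∑ v ∈ Finset.univ.erase ρ, (∑ k ∈ Finset.range (G.dist ρ v), g (k + 1) +
          ∑ k ∈ Finset.range (G.dist ρ v - 1), g (k + 1)) := by
      rw [← Finset.sum_sub_distrib]
      refine Finset.sum_congr rfl fun v hv => ?_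
      have hpos : 0 < G.dist ρ v := hG.1.pos_dist_of_ne (Finset.ne_of_mem_erase hv).symm
      obtain ⟨d, hd⟩ : ∃ d, G.dist ρ v = d + 1 := ⟨G.dist ρ v - 1, by omega⟩
      rw [hd, Nat.add_sub_cancel, Finset.sum_range_succ]
      push_cast
      ring
    rw [e, this]
    ring
  have hc := key (fun _ => 1)
  simp at hc
  have hpos : 0 < Fintype.card V := Fintype.card_pos_iff.2 ⟨ρ⟩
  have hc2 : Fintype.card V - 1 = G.dist ρ a + G.dist ρ b := by
    rw [Nat.cast_sub (by omega)] at hc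
    have : (Fintype.card V : ℝ) = G.dist ρ a + G.dist ρ b + 1 := by
      push_cast at hc; linarith
    have : Fintype.card V = G.dist ρ a + G.dist ρ b + 1 := by exact_mod_cast this
    omega
  rw [key g, show (Fintype.card V - 1) / 2 = G.dist ρ a by omega,
    show Fintype.card V / 2 = G.dist ρ b by omega]

lemma reg_HA {V : Type*} [Fintype V] (G : SimpleGraph V) (hG : Unicyclic G)
    (hr : ∀ v, deg G v = 2) :
    HA G = 2 * (Fintype.card V : ℝ) * (harmonicNum ((Fintype.card V - 1) / 2)
      + harmonicNum (Fintype.card V / 2)) := by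
  classical
  rw [S15.HA_eq]
  have : ∀ u, ∑ v, ((deg G u : ℝ) + deg G v) / (G.dist u v) =
      4 * (harmonicNum ((Fintype.card V - 1) / 2) + harmonicNum (Fintype.card V / 2)) := by
    intro u
    have h := reg_sum G hG hr u (fun k => 1 / (k : ℝ))
    simp only [hr]
    rw [← Finset.add_sum_erase _ _ (Finset.mem_univ u), SimpleGraph.dist_self]
    have e : harmonicNum ((Fintype.card V - 1) / 2) + harmonicNum (Fintype.card V / 2) =
      ∑ v ∈ Finset.univ.erase u, 1 / (G.dist u v : ℝ) := by
      rw [h]; simp [harmonicNum]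
    rw [e, Finset.mul_sum]
    simp only [Nat.cast_zero, div_zero, zero_add]
    refine Finset.sum_congr rfl fun v _ => ?_
    push_cast
    ring
  rw [Finset.sum_congr rfl fun u _ => this u]
  simp
  ring

lemma leaf_low {j : ℕ} {G : SimpleGraph (Fin (j + 3 + 1))} {ℓ : Fin (j + 3 + 1)}
    {H : SimpleGraph (Fin (j + 3))} {w : Fin (j + 3)} (h : LeafExt G ℓ H w) (hH : Unicyclic H) :
    HA H + incr j < HA G ∨ (HA H + incr j ≤ HA G ∧
      ∃ a b, H.Adj a b ∧ H.dist w a = j + 1 ∧ H.dist w b = j + 1) := by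
  obtain ⟨a, b, x, y, hab, h1, h2, hI, hxy, hx, hy, hd⟩ := exists_ident H hH w
  have hb := (dist_bound H hH.1 w x y hxy hx hy hd).2
  simp only [Fintype.card_fin, show j + 3 - 2 = j + 1 by omega] at hb
  have hs := sum_low H hH.1 w x y hxy hx hy hd
  simp only [Fintype.card_fin, show j + 3 - 2 = j + 1 by omega] at hs
  have s1 := hs (fun k => 1 / ((k : ℝ) + 1)) (by
    intro i k hi hik
    have : (i : ℝ) ≤ k := by exact_mod_cast hik
    gcongr)
  have s2 := hs (fun k => 1 / (k : ℝ)) (by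
    intro i k hi hik
    have : (i : ℝ) ≤ k := by exact_mod_cast hik
    have : (0 : ℝ) < i := by exact_mod_cast hi
    gcongr)
  have hle : ∀ z, 1 / (((j + 1 : ℕ) : ℝ) + 1) ≤ 1 / ((H.dist w z : ℝ) + 1) := by
    intro z
    have : (H.dist w z : ℝ) ≤ (j + 1 : ℕ) := by exact_mod_cast hb z
    gcongr
  have hlt : ∀ z, H.dist w z ≠ j + 1 → 1 / (((j + 1 : ℕ) : ℝ) + 1) < 1 / ((H.dist w z : ℝ) + 1) := by
    intro z hz
    have := hb z
    have : (H.dist w z : ℝ) < (j + 1 : ℕ) := by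
      have : H.dist w z < j + 1 := by omega
      exact_mod_cast this
    gcongr
  rw [h.HA_eq hH a b hI]
  unfold incr
  have ha' := hle a
  have hb' := hle b
  by_cases hA : H.dist w a = j + 1
  · by_cases hB : H.dist w b = j + 1
    · right
      refine ⟨by linarith, a, b, hab, hA, hB⟩
    · left
      have := hlt b hB
      linarith
  · left
    have := hlt a hA
    linarith

lemma leaf_eq {j : ℕ} {G : SimpleGraph (Fin (j + 3 + 1))} {ℓ : Fin (j + 3 + 1)}
    {H : SimpleGraph (Fin (j + 3))} {w : Fin (j + 3)} (h : LeafExt G ℓ H w) (hH : Unicyclic H)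
    (a b : Fin (j + 3)) (hab : H.Adj a b) (ha : H.dist w a = j + 1) (hb : H.dist w b = j + 1) :
    HA G = HA H + incr j := by
  have hI := ident_same H hH w a b hab (by rw [ha, hb])
  have haw : a ≠ w := by rintro rfl; simp at ha
  have hbw : b ≠ w := by rintro rfl; simp at hb
  have hl := layers H hH.1 w a b hab.ne haw hbw (by simpa using ha) (by simpa using hb)
  simp only [Fintype.card_fin, show j + 3 - 2 = j + 1 by omega] at hl
  have s1 := hl (fun k => 1 / ((k : ℝ) + 1))
  have s2 := hl (fun k => 1 / (k : ℝ))
  rw [h.HA_eq hH a b hI, s1, s2, ha, hb]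
  unfold incr
  ring

lemma two_le_deg {V : Type*} [Fintype V] (G : SimpleGraph V) (a b c : V) (hbc : b ≠ c)
    (h1 : G.Adj a b) (h2 : G.Adj a c) : 2 ≤ deg G a := by
  classical
  rw [deg_eq_degree, ← card_neighborFinset_eq_degree, ← Finset.card_pair hbc]
  apply Finset.card_le_card
  intro z
  simp only [Finset.mem_insert, Finset.mem_singleton, mem_neighborFinset]
  rintro (rfl | rfl) <;> assumption

lemma triangle_onCycle {V : Type*} (G : SimpleGraph V) (x a b : V) (h1 : G.Adj x a)
    (h2 : G.Adj a b) (h3 : G.Adj b x) : OnCycle G x := by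
  refine ⟨Walk.cons h1 (Walk.cons h2 (Walk.cons h3 Walk.nil)), ?_⟩
  rw [Walk.cons_isCycle_iff]
  have := h1.ne
  have := h2.ne
  have := h3.ne
  constructor
  · simp [Walk.cons_isPath_iff]
    grind
  · simp
    grind

lemma leaf_cyclePath {j : ℕ} {G : SimpleGraph (Fin (j + 3 + 1))} {ℓ : Fin (j + 3 + 1)}
    {H : SimpleGraph (Fin (j + 3))} {w : Fin (j + 3)} (h : LeafExt G ℓ H w) (hH : Unicyclic H)
    (a b : Fin (j + 3)) (hab : H.Adj a b) (ha : H.dist w a = j + 1) (hb : H.dist w b = j + 1) :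
    IsCyclePath G := by
  have hI := ident_same H hH w a b hab (by rw [ha, hb])
  have haw : a ≠ w := by rintro rfl; simp at ha
  have hbw : b ≠ w := by rintro rfl; simp at hb
  have hl := layers H hH.1 w a b hab.ne haw hbw (by simpa using ha) (by simpa using hb)
  simp only [Fintype.card_fin, show j + 3 - 2 = j + 1 by omega] at hl
  obtain ⟨p, hpa, hpd⟩ := exists_parent hH.1 w a haw
  obtain ⟨q, hqb, hqd⟩ := exists_parent hH.1 w b hbw
  have hdegA : 2 ≤ deg H a := two_le_deg H a b p (by rintro rfl; omega) hab hpa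
  have hdegB : 2 ≤ deg H b := two_le_deg H b a q (by rintro rfl; omega) hab.symm hqb
  -- unique vertex in layer j
  have huniq : ∀ x y, H.dist w x = j → H.dist w y = j → x = y := by
    intro x y hx hy
    by_contra hne
    have hz : ∀ v, H.dist w v = 0 → v = w := fun v h => (hH.1.dist_eq_zero_iff.1 h).symm
    rcases Nat.eq_zero_or_pos j with h0 | h0
    · exact hne ((hz x (by omega)).trans (hz y (by omega)).symm)
    · have hxw : x ≠ w := by rintro rfl; simp at hx; omega
      have hyw : y ≠ w := by rintro rfl; simp at hy; omega
      have e := hl (fun k => if k = j then 1 else 0)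
      have r : ∑ k ∈ Finset.range (j + 1), (if k + 1 = j then (1 : ℝ) else 0) +
          (if j + 1 = j then (1 : ℝ) else 0) = 1 := by
        obtain ⟨i, rfl⟩ : ∃ i, j = i + 1 := ⟨j - 1, by omega⟩
        simp
      rw [r] at e
      have : ∑ z ∈ ({x, y} : Finset (Fin (j + 3))), (if H.dist w z = j then (1 : ℝ) else 0) ≤
          ∑ z ∈ Finset.univ.erase w, (if H.dist w z = j then (1 : ℝ) else 0) := by
        apply Finset.sum_le_sum_of_subset_of_nonneg
        · intro z; simp only [Finset.mem_insert, Finset.mem_singleton, Finset.mem_erase,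
            Finset.mem_univ, and_true]
          rintro (rfl | rfl) <;> assumption
        · intros; split_ifs <;> norm_num
      rw [Finset.sum_pair hne, if_pos hx, if_pos hy, e] at this
      norm_num at this
  -- layer degree sums
  have hdist : ∀ x, H.dist w x ≤ j + 1 := by
    have := (dist_bound H hH.1 w a b hab.ne haw hbw (by rw [ha, hb])).2
    simpa using this
  have hsum : ∀ k, ∑ v, (deg H v : ℝ) * (if H.dist w v = k then 1 else 0) =
      ∑ i ∈ Finset.range (j + 1), ((if i + 1 = k then (1 : ℝ) else 0) + if i = k then 1 else 0)
      + ((if j + 1 = k then 1 else 0) + if j = k then 1 else 0) + (if j + 1 = k then 1 else 0)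
      + (if j + 1 = k then 1 else 0) := by
    intro k
    rw [hI (fun n => if n = k then 1 else 0), ha, hb,
      hl (fun n => (if n = k then (1 : ℝ) else 0) + if n - 1 = k then 1 else 0)]
    simp
  have hsub : ∀ k (s : Finset (Fin (j + 3))), (∀ v ∈ s, H.dist w v = k) →
      ((∑ v ∈ s, deg H v : ℕ) : ℝ) ≤ ∑ v, (deg H v : ℝ) * (if H.dist w v = k then 1 else 0) := by
    intro k s hs
    push_cast
    calc ∑ v ∈ s, (deg H v : ℝ) = ∑ v ∈ s, (deg H v : ℝ) * (if H.dist w v = k then 1 else 0) := by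
          refine Finset.sum_congr rfl fun v hv => ?_
          rw [if_pos (hs v hv), mul_one]
      _ ≤ _ := by
          apply Finset.sum_le_sum_of_subset_of_nonneg (Finset.subset_univ _)
          intros; split_ifs <;> simp
  have hval : ∀ k, ∑ i ∈ Finset.range (j + 1), ((if i + 1 = k then (1 : ℝ) else 0) + if i = k then 1 else 0)
      = (if 1 ≤ k ∧ k ≤ j + 1 then 1 else 0) + (if k ≤ j then 1 else 0) := by
    intro k
    rw [Finset.sum_add_distrib]
    congr 1
    · cases k with
      | zero => simp
      | succ k => simp [Nat.lt_succ_iff]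
    · simp [Nat.lt_succ_iff]
  have hmain : ∀ x, deg G (ℓ.succAbove x) ≤ 2 ∨
      (deg G (ℓ.succAbove x) ≤ 3 ∧ H.dist w x = j) := by
    intro x
    rw [h.deg_other]
    have hx := hdist x
    by_cases hxj1 : H.dist w x = j + 1
    · left
      have hxw : x ≠ w := by rintro rfl; simp at hxj1
      rw [if_neg hxw]
      have claim : ∀ c, H.dist w c = j + 1 → 2 ≤ deg H c → x ≠ c → deg H x ≤ 2 := by
        intro c hc hc2 hxc
        have e := hsub (j + 1) {x, c} (by
          intro v; simp only [Finset.mem_insert, Finset.mem_singleton]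
          rintro (rfl | rfl) <;> assumption)
        rw [hsum, hval, Finset.sum_pair hxc] at e
        have e' : ((deg H x + deg H c : ℕ) : ℝ) ≤ (4 : ℕ) := by
          refine e.trans ?_
          simp
          norm_num
        have := Nat.cast_le.1 e'
        omega
      by_cases hxa : x = a
      · exact claim b hb hdegB (by rw [hxa]; exact hab.ne)
      · exact claim a ha hdegA hxa
    · have e := hsub (H.dist w x) {x} (by simp)
      rw [hsum, hval, Finset.sum_singleton] at e
      by_cases hxw : x = w
      · subst hxw
        simp only [SimpleGraph.dist_self, if_true] at e hx hxj1 ⊢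
        by_cases hj : j = 0
        · right
          subst hj
          simp at e
          have e' : (deg H x : ℝ) ≤ (2 : ℕ) := by push_cast; linarith
          have := Nat.cast_le.1 e'
          omega
        · left
          simp [hj] at e
          omega
      · have hpos : 0 < H.dist w x := hH.1.pos_dist_of_ne (Ne.symm hxw)
        rw [if_neg hxw]
        by_cases hj : H.dist w x = j
        · right
          refine ⟨?_, hj⟩
          rw [hj] at e hpos
          have e' : (deg H x : ℝ) ≤ (3 : ℕ) := by
            refine e.trans ?_
            have : 1 ≤ j := hpos
            simp [this]
            norm_num
          have := Nat.cast_le.1 e'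
          omega
        · left
          have e' : (deg H x : ℝ) ≤ (2 : ℕ) := by
            refine e.trans ?_
            have h1 : 1 ≤ H.dist w x := hpos
            have h2 : H.dist w x ≤ j := by omega
            rw [if_pos ⟨h1, hx⟩, if_pos h2, if_neg (by omega), if_neg (by omega)]
            norm_num
          have := Nat.cast_le.1 e'
          omega
  refine ⟨h.uni_up hH, fun v => ?_⟩
  induction v using Fin.succAboveCases ℓ with
  | x => rw [h.deg_leaf]; exact ⟨fun _ => by omega, fun _ => by omega⟩
  | p x =>
    rcases hmain x with h2 | ⟨h3, hxj⟩
    · exact ⟨fun _ => by omega, fun _ => by omega⟩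
    · refine ⟨fun _ => h3, fun hn => absurd ?_ hn⟩
      have hpx : p = x := huniq p x (by omega) hxj
      have hqx : q = x := huniq q x (by omega) hxj
      subst hpx
      subst hqx
      exact triangle_onCycle G _ (ℓ.succAbove a) (ℓ.succAbove b) ((h.adj _ _).2 hpa.symm)
        ((h.adj _ _).2 hab) ((h.adj _ _).2 hqb)

lemma exists_extremal (j : ℕ) : ∃ (H : SimpleGraph (Fin (j + 3))) (w a b : Fin (j + 3)),
    Unicyclic H ∧ H.Adj a b ∧ H.dist w a = j + 1 ∧ H.dist w b = j + 1 ∧ HA H = Lv j := by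
  induction j with
  | zero =>
    have hd : ∀ v, deg (⊤ : SimpleGraph (Fin 3)) v = 2 := by
      intro v
      rw [deg_eq_degree]; simp
    have hU : Unicyclic (⊤ : SimpleGraph (Fin 3)) := by
      refine ⟨connected_top, ?_⟩
      have := handshake (⊤ : SimpleGraph (Fin 3))
      simp only [hd] at this
      simp only [Finset.sum_const, Finset.card_univ, Fintype.card_fin, smul_eq_mul] at this ⊢
      omega
    refine ⟨⊤, 0, 1, 2, hU, by simp, ?_, ?_, ?_⟩
    · rw [SimpleGraph.dist_eq_one_iff_adj]; simp
    · rw [SimpleGraph.dist_eq_one_iff_adj]; simp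
    · rw [reg_HA _ hU hd]
      simp [Lv, harmonicNum]
      norm_num
  | succ j ih =>
    obtain ⟨H, w, a, b, hH, hab, ha, hb, hL⟩ := ih
    obtain ⟨G, hG⟩ := add_leaf H w
    refine ⟨G, 0, Fin.succAbove 0 a, Fin.succAbove 0 b, hG.uni_up hH, (hG.adj a b).2 hab, ?_, ?_, ?_⟩
    · rw [hG.dist_leaf hH.1, ha]
    · rw [hG.dist_leaf hH.1, hb]
    · rw [leaf_eq hG hH a b hab ha hb, hL, Lv_succ]

lemma exists_cyclePath (j : ℕ) : ∃ G : SimpleGraph (Fin (j + 3 + 1)), IsCyclePath G ∧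
    HA G = Lv (j + 1) := by
  obtain ⟨H, w, a, b, hH, hab, ha, hb, hL⟩ := exists_extremal j
  obtain ⟨G, hG⟩ := add_leaf H w
  exact ⟨G, leaf_cyclePath hG hH a b hab ha hb, by rw [leaf_eq hG hH a b hab ha hb, hL, Lv_succ]⟩

lemma three_le {V : Type*} [Fintype V] (G : SimpleGraph V) (hG : Unicyclic G) :
    3 ≤ Fintype.card V := by
  classical
  obtain ⟨ρ⟩ := hG.1.nonempty
  obtain ⟨a, b, x, y, hab, h1, h2, hI, hxy, hx, hy, hd⟩ := exists_ident G hG ρ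
  exact (dist_bound G hG.1 ρ x y hxy hx hy hd).1

lemma reg_or_leaf {V : Type*} [Fintype V] (G : SimpleGraph V) (hG : Unicyclic G) :
    (∀ v, deg G v = 2) ∨ ∃ ℓ, deg G ℓ = 1 := by
  classical
  by_cases hleaf : ∃ ℓ, deg G ℓ = 1
  · exact Or.inr hleaf
  left
  push Not at hleaf
  have h3 := three_le G hG
  have hge : ∀ v ∈ (Finset.univ : Finset V), 2 ≤ deg G v := by
    intro v _
    obtain ⟨u, hu⟩ := Fintype.exists_ne_of_one_lt_card (by omega) v
    obtain ⟨z, hz, -⟩ := exists_parent hG.1 u v hu.symm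
    have : 0 < deg G v := by
      rw [deg_eq_degree, degree_pos_iff_exists_adj]
      exact ⟨z, hz⟩
    have := hleaf v
    omega
  have hs := handshake G
  rw [hG.2] at hs
  have := (Finset.sum_eq_sum_iff_of_le hge).1 (by rw [hs]; simp; ring)
  intro v
  exact (this v (Finset.mem_univ v)).symm

lemma special {G : SimpleGraph (Fin (1 + 3 + 1))} {ℓ : Fin (1 + 3 + 1)}
    {H : SimpleGraph (Fin (1 + 3))} {w : Fin (1 + 3)} (h : LeafExt G ℓ H w) (hH : Unicyclic H)
    (hr : ∀ v, deg H v = 2) : Lv 2 < HA G := by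
  obtain ⟨a, b, x, y, hab, h1, h2, hI, hxy, hx, hy, hd⟩ := exists_ident H hH w
  have hb := (dist_bound H hH.1 w x y hxy hx hy hd).2
  simp only [Fintype.card_fin] at hb
  have hle : ∀ z, (1 : ℝ) / 3 ≤ 1 / ((H.dist w z : ℝ) + 1) := by
    intro z
    have : (H.dist w z : ℝ) ≤ (2 : ℕ) := by exact_mod_cast hb z
    have h3 : (H.dist w z : ℝ) + 1 ≤ 3 := by push_cast at this; linarith
    gcongr
  have s1 := reg_sum H hH hr w (fun k => 1 / ((k : ℝ) + 1))
  have s2 := reg_sum H hH hr w (fun k => 1 / (k : ℝ))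
  have s3 := reg_HA H hH hr
  have e1 : (Fintype.card (Fin (1 + 3)) - 1) / 2 = 1 := by simp
  have e2 : Fintype.card (Fin (1 + 3)) / 2 = 2 := by simp
  rw [e1, e2] at s1 s2 s3
  rw [h.HA_eq hH a b hI, s1, s2, s3, Lv_two]
  have ha' := hle a
  have hb' := hle b
  simp only [harmonicNum, Finset.sum_range_succ, Finset.sum_range_zero, Fintype.card_fin]
  push_cast
  norm_num at ha' hb' ⊢
  linarith

lemma main_bound (j : ℕ) : ∀ G : SimpleGraph (Fin (j + 3)), Unicyclic G →
    (j = 1 ∧ ∀ v, deg G v = 2) ∨ Lv j ≤ HA G := by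
  induction j with
  | zero =>
    intro G hG
    right
    rcases reg_or_leaf G hG with hr | ⟨ℓ, hl⟩
    · rw [reg_HA G hG hr, Fintype.card_fin]
      exact cyc_bound 0 (by omega)
    · obtain ⟨H, w, hE⟩ := exists_leafExt G ℓ hl
      have := three_le H (hE.uni_down hG)
      simp at this
  | succ j ih =>
    intro G hG
    rcases reg_or_leaf G hG with hr | ⟨ℓ, hl⟩
    · by_cases hj : j + 1 = 1
      · exact Or.inl ⟨hj, hr⟩
      · right
        rw [reg_HA G hG hr, Fintype.card_fin]
        exact cyc_bound (j + 1) hj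
    · right
      obtain ⟨H, w, hE⟩ := exists_leafExt (m := j + 3) G ℓ hl
      have hH := hE.uni_down hG
      rcases ih H hH with ⟨rfl, hr⟩ | hle
      · exact (special hE hH hr).le
      · rw [Lv_succ]
        rcases leaf_low hE hH with h | h
        · linarith
        · linarith [h.1]

end S15

theorem stmt15 (n : ℕ) (G : SimpleGraph (Fin n)) (hG : Unicyclic G)
    (h : ¬ IsCyclePath G) :
    ∃ G' : SimpleGraph (Fin n), IsCyclePath G' ∧ HA G > HA G' := by
  have h3 := S15.three_le G hG
  rw [Fintype.card_fin] at h3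
  rcases S15.reg_or_leaf G hG with hr | ⟨ℓ, hl⟩
  · exact absurd ⟨hG, fun v => by rw [hr v]; exact ⟨fun _ => by omega, fun _ => by omega⟩⟩ h
  · obtain ⟨m, rfl⟩ : ∃ m, n = m + 1 := ⟨n - 1, by omega⟩
    obtain ⟨H, w, hE⟩ := S15.exists_leafExt G ℓ hl
    have hH := hE.uni_down hG
    have hm := S15.three_le H hH
    rw [Fintype.card_fin] at hm
    obtain ⟨j, rfl⟩ : ∃ j, m = j + 3 := ⟨m - 3, by omega⟩
    obtain ⟨G', hG', hL⟩ := S15.exists_cyclePath j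
    refine ⟨G', hG', ?_⟩
    rw [hL]
    rcases S15.main_bound j H hH with ⟨rfl, hr⟩ | hle
    · exact S15.special hE hH hr
    · rw [S15.Lv_succ]
      rcases S15.leaf_low hE hH with h' | ⟨_, a, b, hab, ha, hb⟩
      · linarith
      · exact absurd (S15.leaf_cyclePath hE hH a b hab ha hb) h
end

section
/- For every cycle-path graph G on n vertices having at least two branching cycle vertices, there exists a cycle-path graph G′ on n vertices with exactly one branching cycle vertex such that H_A(G) > H_A(G′). -/
open Finset SimpleGraph

/-- adjacency in the coordinate model -/
def madj (k i x j y : ℕ) : Prop :=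
  (i = j ∧ (x = y + 1 ∨ y = x + 1)) ∨
  (x = 0 ∧ y = 0 ∧ (j = i + 1 ∨ i = j + 1 ∨ (i = 0 ∧ j = k - 1) ∨ (j = 0 ∧ i = k - 1)))

/-- cyclic distance -/
def cd (k i j : ℕ) : ℕ := min ((i - j) + (j - i)) (k - ((i - j) + (j - i)))

/-- distance in the coordinate model -/
def DD (k i x j y : ℕ) : ℕ :=
  if i = j then (x - y) + (y - x) else x + y + cd k i j

structure Model {V : Type*} (G : SimpleGraph V) (k : ℕ) (a : ℕ → ℕ) (r h : V → ℕ) : Prop where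
  k3 : 3 ≤ k
  inj : ∀ u v, r u = r v → h u = h v → u = v
  rlt : ∀ v, r v < k
  hle : ∀ v, h v ≤ a (r v)
  surj : ∀ i < k, ∀ j ≤ a i, ∃ v, r v = i ∧ h v = j
  adj : ∀ u v, G.Adj u v ↔ madj k (r u) (h u) (r v) (h v)

lemma DD_lip (k i x j y l z : ℕ) (hk : 3 ≤ k) (hi : i < k) (hj : j < k) (hl : l < k)
    (hm : madj k j y l z) : DD k i x l z ≤ DD k i x j y + 1 := by
  unfold madj at hm
  unfold DD cd
  rcases hm with ⟨rfl, hm⟩ | ⟨rfl, rfl, hm⟩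
  · split_ifs <;> omega
  · split_ifs <;> omega

lemma DD_step (k : ℕ) (a : ℕ → ℕ) (i x j y d : ℕ) (hk : 3 ≤ k) (hi : i < k) (hj : j < k)
    (hx : x ≤ a i) (hy : y ≤ a j) (hd : DD k i x j y = d + 1) :
    ∃ l z, l < k ∧ z ≤ a l ∧ madj k l z j y ∧ DD k i x l z = d := by
  by_cases hij : i = j
  · subst hij
    simp only [DD, if_true] at hd
    by_cases hxy : x < y
    · refine ⟨i, y - 1, hi, by omega, ?_, ?_⟩
      · unfold madj; omega
      · simp only [DD, if_true]; omega
    · refine ⟨i, y + 1, hi, by omega, ?_, ?_⟩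
      · unfold madj; omega
      · simp only [DD, if_true]; omega
  · rcases Nat.eq_zero_or_pos y with rfl | hy0
    · unfold DD cd at hd
      rw [if_neg hij] at hd
      -- go around the cycle
      have key : ∃ l, l < k ∧ (j = l + 1 ∨ l = j + 1 ∨ (l = 0 ∧ j = k - 1) ∨ (j = 0 ∧ l = k - 1)) ∧
          cd k i l + 1 = cd k i j := by
        unfold cd
        by_cases h1 : (i - j) + (j - i) ≤ k - ((i - j) + (j - i))
        · by_cases h2 : i < j
          · exact ⟨j - 1, by omega, by omega, by omega⟩
          · exact ⟨j + 1, by omega, by omega, by omega⟩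
        · by_cases h2 : i < j
          · by_cases h3 : j = k - 1
            · exact ⟨0, by omega, by omega, by omega⟩
            · exact ⟨j + 1, by omega, by omega, by omega⟩
          · by_cases h3 : j = 0
            · exact ⟨k - 1, by omega, by omega, by omega⟩
            · exact ⟨j - 1, by omega, by omega, by omega⟩
      obtain ⟨l, hl, h1, h2⟩ := key
      refine ⟨l, 0, hl, by omega, ?_, ?_⟩
      · unfold madj; omega
      · unfold DD
        unfold cd at *
        split_ifs <;> omega
    · refine ⟨j, y - 1, hj, by omega, ?_, ?_⟩
      · unfold madj; omega
      · unfold DD at *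
        rw [if_neg hij] at *
        omega

lemma DD_zero (k i x j y : ℕ) (hi : i < k) (hj : j < k) (hd : DD k i x j y = 0) :
    i = j ∧ x = y := by
  unfold DD cd at hd
  split_ifs at hd <;> omega

section
variable {V : Type*} {G : SimpleGraph V} {k : ℕ} {a : ℕ → ℕ} {r h : V → ℕ}

lemma Model.walk_le (M : Model G k a r h) (u : V) : ∀ {v w : V} (p : G.Walk v w),
    DD k (r u) (h u) (r w) (h w) ≤ DD k (r u) (h u) (r v) (h v) + p.length := by
  intro v w p
  induction p with
  | nil => simp
  | cons hadj p ih =>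
    have := DD_lip k (r u) (h u) _ _ _ _ M.k3 (M.rlt _) (M.rlt _) (M.rlt _) ((M.adj _ _).1 hadj)
    simp only [Walk.length_cons]
    omega

lemma Model.exists_walk (M : Model G k a r h) (u : V) : ∀ (d : ℕ) (v : V),
    DD k (r u) (h u) (r v) (h v) = d → ∃ p : G.Walk u v, p.length = d := by
  intro d
  induction d with
  | zero =>
    intro v hv
    obtain ⟨h1, h2⟩ := DD_zero k _ _ _ _ (M.rlt _) (M.rlt _) hv
    obtain rfl := M.inj _ _ h1 h2
    exact ⟨Walk.nil, rfl⟩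
  | succ d ih =>
    intro v hv
    obtain ⟨l, z, hl, hz, hm, hd⟩ := DD_step k a _ _ _ _ d M.k3 (M.rlt u) (M.rlt v) (M.hle u) (M.hle v) hv
    obtain ⟨w, rfl, rfl⟩ := M.surj l hl z hz
    obtain ⟨p, hp⟩ := ih w hd
    exact ⟨p.concat ((M.adj _ _).2 hm), by simp [hp]⟩

lemma Model.dist_eq (M : Model G k a r h) (u v : V) :
    G.dist u v = DD k (r u) (h u) (r v) (h v) := by
  obtain ⟨p, hp⟩ := M.exists_walk u _ v rfl
  apply le_antisymm
  · rw [← hp]; exact dist_le p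
  · obtain ⟨q, hq⟩ := p.reachable.exists_walk_length_eq_dist
    have := M.walk_le u q
    rw [hq] at this
    simpa [DD] using this

lemma Model.connected (M : Model G k a r h) : G.Connected := by
  obtain ⟨v, _⟩ := M.surj 0 (by have := M.k3; omega) 0 (Nat.zero_le _)
  have : Nonempty V := ⟨v⟩
  exact ⟨fun u v => (M.exists_walk u _ v rfl).choose.reachable⟩

/-- the region -/
def region (k : ℕ) (a : ℕ → ℕ) : Finset (Σ _ : ℕ, ℕ) :=
  (Finset.range k).sigma (fun i => Finset.range (a i + 1))

lemma Model.sum_eq [Fintype V] (M : Model G k a r h) (F : ℕ → ℕ → ℝ) :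
    ∑ v : V, F (r v) (h v) = ∑ i ∈ Finset.range k, ∑ j ∈ Finset.range (a i + 1), F i j := by
  rw [Finset.sum_sigma']
  refine Finset.sum_bij (fun v _ => ⟨r v, h v⟩) ?_ ?_ ?_ ?_
  · intro v _
    have h1 := M.rlt v
    have h2 := M.hle v
    simp only [Finset.mem_sigma, Finset.mem_range]
    omega
  · intro u _ v _ huv
    simp only [Sigma.mk.injEq, heq_eq_eq] at huv
    exact M.inj _ _ huv.1 huv.2
  · rintro ⟨i, j⟩ hb
    simp only [Finset.mem_sigma, Finset.mem_range] at hb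
    obtain ⟨v, h1, h2⟩ := M.surj i hb.1 j (by omega)
    exact ⟨v, Finset.mem_univ _, by simp [h1, h2]⟩
  · intro v _; rfl

/-- the degree of a model vertex -/
def mdeg (a : ℕ → ℕ) (i x : ℕ) : ℕ :=
  if x = 0 then (if 1 ≤ a i then 3 else 2) else (if x < a i then 2 else 1)

lemma Model.deg_eq [Fintype V] (M : Model G k a r h) (v : V) : deg G v = mdeg a (r v) (h v) := by
  classical
  have k3 := M.k3
  have hr := M.rlt v
  have hh := M.hle v
  have e1 : ∃ S : Finset V, S.card = mdeg a (r v) (h v) ∧ ∀ w, w ∈ S ↔ G.Adj v w := by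
    have hex : ∀ i j, ∃ w, (i < k → j ≤ a i → (r w = i ∧ h w = j)) := by
      intro i j
      by_cases hi : i < k
      · by_cases hj : j ≤ a i
        · obtain ⟨w, hw⟩ := M.surj i hi j hj
          exact ⟨w, fun _ _ => hw⟩
        · exact ⟨v, fun _ h => absurd h hj⟩
      · exact ⟨v, fun h => absurd h hi⟩
    choose P hP using hex
    have mem : ∀ i j, i < k → j ≤ a i → ∀ w, w = P i j ↔ (r w = i ∧ h w = j) := by
      intro i j hi hj w
      constructor
      · rintro rfl; exact hP i j hi hj
      · rintro ⟨h1, h2⟩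
        exact M.inj _ _ (by rw [h1, (hP i j hi hj).1]) (by rw [h2, (hP i j hi hj).2])
    have neP : ∀ i j i' j', i < k → j ≤ a i → i' < k → j' ≤ a i' → ¬ (i = i' ∧ j = j') →
        P i j ≠ P i' j' := by
      intro i j i' j' h1 h2 h3 h4 h5 h6
      have := (mem i' j' h3 h4 (P i j)).1 h6
      have := hP i j h1 h2
      omega
    unfold mdeg
    by_cases hv0 : h v = 0
    · have hs : ∃ s p, s < k ∧ p < k ∧ s ≠ p ∧ s ≠ r v ∧ p ≠ r v ∧ ∀ l, l < k →
          ((l = s ∨ l = p) ↔ (l = r v + 1 ∨ r v = l + 1 ∨ (r v = 0 ∧ l = k - 1) ∨ (l = 0 ∧ r v = k - 1))) := by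
        by_cases h1 : r v = 0
        · exact ⟨1, k - 1, by omega, by omega, by omega, by omega, by omega, by omega⟩
        · by_cases h2 : r v = k - 1
          · exact ⟨0, k - 2, by omega, by omega, by omega, by omega, by omega, by omega⟩
          · exact ⟨r v + 1, r v - 1, by omega, by omega, by omega, by omega, by omega, by omega⟩
      obtain ⟨s, p, hs, hp, hsp, hsr, hpr, hl⟩ := hs
      by_cases ha : 1 ≤ a (r v)
      · refine ⟨{P s 0, P p 0, P (r v) 1}, ?_, ?_⟩
        · rw [Finset.card_eq_three.2]
          · simp [hv0, ha]
          · exact ⟨_, _, _, neP _ _ _ _ hs (by omega) hp (by omega) (by omega),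
              neP _ _ _ _ hs (by omega) hr (by omega) (by omega),
              neP _ _ _ _ hp (by omega) hr (by omega) (by omega), rfl⟩
        · intro w
          have h3 := hl (r w) (M.rlt w)
          simp only [Finset.mem_insert, Finset.mem_singleton]
          rw [mem s 0 hs (by omega), mem p 0 hp (by omega), mem (r v) 1 hr ha, M.adj]
          unfold madj
          omega
      · refine ⟨{P s 0, P p 0}, ?_, ?_⟩
        · rw [Finset.card_eq_two.2]
          · simp [hv0, ha]
          · exact ⟨_, _, neP _ _ _ _ hs (by omega) hp (by omega) (by omega), rfl⟩
        · intro w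
          have h3 := hl (r w) (M.rlt w)
          have h4 := M.hle w
          have h5 : r v = r w → a (r w) = a (r v) := fun h => by rw [h]
          simp only [Finset.mem_insert, Finset.mem_singleton]
          rw [mem s 0 hs (by omega), mem p 0 hp (by omega), M.adj]
          unfold madj
          omega
    · by_cases ha : h v < a (r v)
      · refine ⟨{P (r v) (h v - 1), P (r v) (h v + 1)}, ?_, ?_⟩
        · rw [Finset.card_eq_two.2]
          · simp [hv0, ha]
          · exact ⟨_, _, neP _ _ _ _ hr (by omega) hr (by omega) (by omega), rfl⟩
        · intro w
          simp only [Finset.mem_insert, Finset.mem_singleton]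
          rw [mem _ _ hr (by omega), mem _ _ hr (by omega), M.adj]
          unfold madj
          omega
      · refine ⟨{P (r v) (h v - 1)}, ?_, ?_⟩
        · simp [hv0, ha]
        · intro w
          have h4 := M.hle w
          have h5 : r v = r w → a (r w) = a (r v) := fun h => by rw [h]
          simp only [Finset.mem_singleton]
          rw [mem _ _ hr (by omega), M.adj]
          unfold madj
          omega
  obtain ⟨S, hS, hS2⟩ := e1
  rw [← hS]
  unfold deg
  have : {w // G.Adj v w} = {w // w ∈ S} := by simp [hS2]
  rw [this]
  simp

end

/-- modified reciprocal -/
noncomputable def gg (n : ℕ) : ℝ := if n = 0 then 1 else 1 / (n : ℝ)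

lemma gg_succ (n : ℕ) : gg (n + 1) = 1 / ((n : ℝ) + 1) := by
  simp [gg]

lemma gg_anti : Antitone gg := by
  apply antitone_nat_of_succ_le
  intro n
  rcases n with _ | n
  · simp [gg]
  · rw [gg_succ, gg_succ]
    apply one_div_le_one_div_of_le <;> push_cast <;> linarith [(Nat.cast_nonneg n : (0:ℝ) ≤ n)]

lemma gg_strict (n : ℕ) : gg (n + 2) < gg (n + 1) := by
  rw [show n + 2 = (n + 1) + 1 from rfl, gg_succ (n + 1), gg_succ n]
  apply one_div_lt_one_div_of_lt <;> push_cast <;> linarith [(Nat.cast_nonneg n : (0:ℝ) ≤ n)]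

lemma HA_eq_s16 {V : Type*} [Fintype V] (G : SimpleGraph V) (hc : G.Connected) :
    HA G + ∑ v : V, (deg G v : ℝ) = ∑ w : V, ∑ u : V, (deg G u : ℝ) * gg (G.dist u w) := by
  classical
  have h1 : ∀ u v : V, (if u = v then 0 else ((deg G u + deg G v : ℕ) : ℝ) / (G.dist u v))
      + (if u = v then 2 * (deg G u : ℝ) else 0)
      = (deg G u : ℝ) * gg (G.dist u v) + (deg G v : ℝ) * gg (G.dist u v) := by
    intro u v
    by_cases h : u = v
    · subst h; simp [gg]; ring
    · have : G.dist u v ≠ 0 := by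
        rw [Ne, hc.dist_eq_zero_iff]; exact h
      simp [gg, h, this]; ring
  have h2 : (∑ u : V, ∑ v : V, if u = v then 0 else ((deg G u + deg G v : ℕ) : ℝ) / (G.dist u v))
      + 2 * ∑ v : V, (deg G v : ℝ) = 2 * ∑ w : V, ∑ u : V, (deg G u : ℝ) * gg (G.dist u w) := by
    have h3 : ∑ u : V, ∑ v : V, ((if u = v then 0 else
        ((deg G u + deg G v : ℕ) : ℝ) / (G.dist u v)) + (if u = v then 2 * (deg G u : ℝ) else 0))
        = ∑ u : V, ∑ v : V, ((deg G u : ℝ) * gg (G.dist u v) + (deg G v : ℝ) * gg (G.dist u v)) :=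
      Finset.sum_congr rfl fun u _ => Finset.sum_congr rfl fun v _ => h1 u v
    simp only [Finset.sum_add_distrib] at h3
    have h4 : ∑ u : V, ∑ v : V, (if u = v then 2 * (deg G u : ℝ) else 0)
        = 2 * ∑ v : V, (deg G v : ℝ) := by
      simp [Finset.mul_sum]
    have h5 : ∑ u : V, ∑ v : V, (deg G u : ℝ) * gg (G.dist u v)
        = ∑ w : V, ∑ u : V, (deg G u : ℝ) * gg (G.dist u w) := Finset.sum_comm
    have h6 : ∑ u : V, ∑ v : V, (deg G v : ℝ) * gg (G.dist u v)
        = ∑ w : V, ∑ u : V, (deg G u : ℝ) * gg (G.dist u w) :=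
      Finset.sum_congr rfl fun u _ => Finset.sum_congr rfl fun v _ => by rw [G.dist_comm]
    linarith
  unfold HA
  have h4 : (∑ u : V, ∑ v : V, if u = v then 0 else ((deg G u + deg G v : ℕ) : ℝ) / (G.dist u v))
    = 2 * (HA G) := by unfold HA; simp
  have h5 := h4 ▸ h2
  unfold HA at h5
  linarith

lemma mdeg_sum (a : ℕ → ℕ) (i : ℕ) (F : ℕ → ℝ) :
    ∑ x ∈ Finset.range (a i + 1), (mdeg a i x : ℝ) * F x
      = 2 * F 0 + ∑ x ∈ Finset.range (a i), (F (x + 1) + F x) := by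
  rcases hb : a i with _ | b
  · simp [mdeg, hb]
  · rw [Finset.sum_range_succ', Finset.sum_range_succ]
    have h1 : ∑ x ∈ Finset.range b, (mdeg a i (x + 1) : ℝ) * F (x + 1)
        = ∑ x ∈ Finset.range b, (F (x + 1) + F (x + 1)) := by
      refine Finset.sum_congr rfl fun x hx => ?_
      have := Finset.mem_range.1 hx
      rw [show mdeg a i (x + 1) = 2 by simp [mdeg, hb]; omega]
      push_cast; ring
    rw [h1, Finset.sum_add_distrib, Finset.sum_add_distrib, Finset.sum_range_succ,
      Finset.sum_range_succ' (fun x => F x)]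
    have h2 : mdeg a i (b + 1) = 1 := by simp [mdeg, hb]
    have h3 : mdeg a i 0 = 3 := by simp [mdeg, hb]
    rw [h2, h3]; push_cast; ring

lemma cd_comm (k i j : ℕ) : cd k i j = cd k j i := by unfold cd; omega

lemma cd_sum (k q : ℕ) (hq : q < k) (F : ℕ → ℝ) :
    ∑ i ∈ Finset.range k, F (cd k i q) = ∑ i ∈ Finset.range k, F (cd k i 0) := by
  refine Finset.sum_bij' (fun i _ => if q ≤ i then i - q else i + k - q)
    (fun i _ => if i + q < k then i + q else i + q - k) ?_ ?_ ?_ ?_ ?_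
  · intro i hi
    simp only [Finset.mem_range] at *
    split_ifs <;> omega
  · intro i hi
    simp only [Finset.mem_range] at *
    split_ifs <;> omega
  · intro i hi
    simp only [Finset.mem_range] at *
    split_ifs <;> omega
  · intro i hi
    simp only [Finset.mem_range] at *
    split_ifs <;> omega
  · intro i hi
    simp only [Finset.mem_range] at *
    congr 1
    unfold cd
    split_ifs <;> omega

/-- Sum over the cycle at height m. -/
noncomputable def Gam (k m : ℕ) : ℝ := ∑ i ∈ Finset.range k, gg (m + cd k i 0)

lemma Gam_eq (k m q : ℕ) (hq : q < k) : ∑ i ∈ Finset.range k, gg (m + cd k i q) = Gam k m :=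
  cd_sum k q hq (fun c => gg (m + c))

lemma Gam_eq' (k m q : ℕ) (hq : q < k) : ∑ i ∈ Finset.range k, gg (m + cd k q i) = Gam k m := by
  rw [← Gam_eq k m q hq]
  exact Finset.sum_congr rfl fun i _ => by rw [cd_comm]

/-- Weight of a pair on the same path, at distance d + 1. -/
noncomputable def psi (d : ℕ) : ℝ := 2 * gg (d + 1) + gg d + gg (d + 2)

lemma sym_sum (k : ℕ) (Y : ℕ → ℕ → ℝ) (hY : ∀ i j, i ≠ j → Y i j = Y j i) :
    ∑ q ∈ Finset.range k, ∑ i ∈ Finset.range k, Y q i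
      = ∑ q ∈ Finset.range k, (Y q q + 2 * ∑ i ∈ Finset.range q, Y q i) := by
  induction k with
  | zero => simp
  | succ k ih =>
    rw [Finset.sum_range_succ _ k, Finset.sum_range_succ (fun q => Y q q + _) k, ← ih]
    simp only [Finset.sum_range_succ _ k, Finset.sum_add_distrib]
    have : ∑ q ∈ Finset.range k, Y q k = ∑ q ∈ Finset.range k, Y k q := by
      refine Finset.sum_congr rfl fun q hq => ?_
      have := Finset.mem_range.1 hq
      exact hY _ _ (by omega)
    rw [this]; ring

lemma diag_sum (b : ℕ) :
    ∑ m ∈ Finset.range b, ∑ x ∈ Finset.range b,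
      (gg ((x + 1 - (m + 1)) + (m + 1 - (x + 1))) + gg ((x - (m + 1)) + (m + 1 - x)))
      = ∑ m ∈ Finset.range b, (2 + ∑ i ∈ Finset.range m, psi i) := by
  induction b with
  | zero => simp
  | succ b ih =>
    rw [Finset.sum_range_succ (fun m => 2 + _) b, ← ih, Finset.sum_range_succ]
    simp only [Finset.sum_range_succ _ b, Finset.sum_add_distrib]
    have h1 : ∑ i ∈ Finset.range b, psi i = ∑ x ∈ Finset.range b,
        ((gg (x + 1 - (b + 1) + (b + 1 - (x + 1))) + gg (x - (b + 1) + (b + 1 - x)))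
        + (gg (b + 1 - (x + 1) + (x + 1 - (b + 1))) + gg (b - (x + 1) + (x + 1 - b)))) := by
      rw [← Finset.sum_range_reflect]
      refine Finset.sum_congr rfl fun x hx => ?_
      have := Finset.mem_range.1 hx
      unfold psi
      rw [show b - 1 - x + 1 = b - x by omega, show b - 1 - x + 2 = b - x + 1 by omega,
        show x + 1 - (b + 1) + (b + 1 - (x + 1)) = b - x by omega,
        show x - (b + 1) + (b + 1 - x) = b - x + 1 by omega,
        show b + 1 - (x + 1) + (x + 1 - (b + 1)) = b - x by omega,
        show b - (x + 1) + (x + 1 - b) = b - 1 - x by omega]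
      ring
    rw [h1]
    simp only [Finset.sum_add_distrib]
    rw [show b + 1 - (b + 1) + (b + 1 - (b + 1)) = 0 by omega,
      show b - (b + 1) + (b + 1 - b) = 1 by omega]
    have : gg 0 + gg 1 = 2 := by norm_num [gg]
    linarith

/-- main term -/
noncomputable def PP (k m : ℕ) : ℝ := 3 * Gam k (m + 1) + Gam k m + ∑ i ∈ Finset.range m, psi i

/-- cross term -/
noncomputable def cross (k : ℕ) (a : ℕ → ℕ) (q m : ℕ) : ℝ :=
  ∑ i ∈ Finset.range q, ∑ x ∈ Finset.range (a i),
    2 * (gg (x + m + 2 + cd k i q) + gg (x + m + 1 + cd k i q))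

lemma DD_left (k i q m : ℕ) : DD k i 0 q m = m + cd k i q := by
  unfold DD cd
  split_ifs <;> omega

lemma DD_right (k i x q : ℕ) : DD k i x q 0 = x + cd k i q := by
  unfold DD cd
  split_ifs <;> omega

lemma T_eq (k : ℕ) (a : ℕ → ℕ) :
    ∑ q ∈ Finset.range k, ∑ m ∈ Finset.range (a q + 1),
      ∑ i ∈ Finset.range k, ∑ x ∈ Finset.range (a i + 1), (mdeg a i x : ℝ) * gg (DD k i x q m)
    = ∑ _q ∈ Finset.range k, 2 * Gam k 0
      + ∑ q ∈ Finset.range k, ∑ m ∈ Finset.range (a q), (PP k m + 2 + cross k a q m) := by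
  simp only [mdeg_sum a _ (fun x => gg (DD k _ x _ _))]
  simp only [Finset.sum_range_succ' _ (a _)]
  simp only [DD_left, DD_right, zero_add, Finset.sum_add_distrib]
  -- cycle / cycle
  have hA : ∑ q ∈ Finset.range k, ∑ i ∈ Finset.range k, 2 * gg (cd k i q)
      = ∑ _q ∈ Finset.range k, 2 * Gam k 0 := by
    refine Finset.sum_congr rfl fun q hq => ?_
    rw [← Finset.mul_sum, ← Gam_eq k 0 q (Finset.mem_range.1 hq)]
    simp
  have hB : ∑ q ∈ Finset.range k, ∑ m ∈ Finset.range (a q), ∑ i ∈ Finset.range k,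
      2 * gg (m + 1 + cd k i q) = ∑ q ∈ Finset.range k, ∑ m ∈ Finset.range (a q), 2 * Gam k (m + 1) := by
    refine Finset.sum_congr rfl fun q hq => Finset.sum_congr rfl fun m _ => ?_
    rw [← Finset.mul_sum, ← Gam_eq k _ q (Finset.mem_range.1 hq)]
  have hC : ∀ c, ∑ q ∈ Finset.range k, ∑ i ∈ Finset.range k, ∑ x ∈ Finset.range (a i),
      gg (x + c + cd k i q) = ∑ q ∈ Finset.range k, ∑ m ∈ Finset.range (a q), Gam k (m + c) := by
    intro c
    rw [Finset.sum_comm]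
    refine Finset.sum_congr rfl fun i hi => ?_
    rw [Finset.sum_comm]
    refine Finset.sum_congr rfl fun x _ => ?_
    rw [← Gam_eq' k _ i (Finset.mem_range.1 hi)]
  have hC1 := hC 1
  have hC0 := hC 0
  simp only [add_zero] at hC0
  -- off / off
  have hX := sym_sum k (fun q i => ∑ m ∈ Finset.range (a q), ∑ x ∈ Finset.range (a i),
      (gg (DD k i (x + 1) q (m + 1)) + gg (DD k i x q (m + 1)))) (by
    intro q i hqi
    rw [Finset.sum_comm]
    refine Finset.sum_congr rfl fun x _ => Finset.sum_congr rfl fun m _ => ?_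
    unfold DD
    rw [if_neg (Ne.symm hqi), if_neg (Ne.symm hqi), if_neg hqi, if_neg hqi, cd_comm k i q]
    congr 2 <;> omega)
  have hX1 : ∑ q ∈ Finset.range k, ∑ i ∈ Finset.range k, (∑ m ∈ Finset.range (a q),
      ∑ x ∈ Finset.range (a i), (gg (DD k i (x + 1) q (m + 1)) + gg (DD k i x q (m + 1))))
      = ∑ q ∈ Finset.range k, ∑ m ∈ Finset.range (a q),
        (2 + ∑ i ∈ Finset.range m, psi i + cross k a q m) := by
    rw [hX]
    refine Finset.sum_congr rfl fun q hq => ?_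
    rw [Finset.sum_add_distrib, ← diag_sum]
    congr 1
    · refine Finset.sum_congr rfl fun m _ => Finset.sum_congr rfl fun x _ => ?_
      simp [DD]
    · rw [Finset.mul_sum]
      unfold cross
      rw [Finset.sum_comm]
      refine Finset.sum_congr rfl fun i hi => ?_
      have := Finset.mem_range.1 hi
      rw [Finset.mul_sum]
      refine Finset.sum_congr rfl fun m _ => ?_
      rw [Finset.mul_sum]
      refine Finset.sum_congr rfl fun x _ => ?_
      unfold DD
      rw [if_neg (by omega), if_neg (by omega)]
      congr 3 <;> omega
  have hX2 : ∑ q ∈ Finset.range k, ∑ m ∈ Finset.range (a q), ∑ i ∈ Finset.range k,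
      ∑ x ∈ Finset.range (a i), (gg (DD k i (x + 1) q (m + 1)) + gg (DD k i x q (m + 1)))
      = ∑ q ∈ Finset.range k, ∑ m ∈ Finset.range (a q),
        (2 + ∑ i ∈ Finset.range m, psi i + cross k a q m) := by
    rw [← hX1]
    refine Finset.sum_congr rfl fun q _ => ?_
    rw [Finset.sum_comm]
  simp only [Finset.sum_add_distrib] at hX2
  simp only [PP, Finset.sum_add_distrib, ← Finset.mul_sum] at *
  linarith

lemma Gam_step (k j : ℕ) (F : ℕ → ℝ) (hF : Antitone F) (hk : 3 ≤ k) :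
    ∑ i ∈ Finset.range k, F (j + 1 + cd k i 0) - ∑ i ∈ Finset.range k, F (j + cd k i 0)
      ≤ F (j + k / 2 + 1) - F j := by
  rw [← Finset.sum_sub_distrib, ← Finset.sum_range_add_sum_Ico _ (show k / 2 + 1 ≤ k by omega)]
  have h1 : ∑ i ∈ Finset.range (k / 2 + 1), (F (j + 1 + cd k i 0) - F (j + cd k i 0))
      = F (j + k / 2 + 1) - F j := by
    have := Finset.sum_range_sub (fun i => F (j + i)) (k / 2 + 1)
    rw [← add_assoc, add_zero] at this
    rw [← this]
    refine Finset.sum_congr rfl fun i hi => ?_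
    have := Finset.mem_range.1 hi
    have h2 : cd k i 0 = i := by unfold cd; omega
    rw [h2, show j + 1 + i = j + (i + 1) by omega]
  have h2 : ∑ i ∈ Finset.Ico (k / 2 + 1) k, (F (j + 1 + cd k i 0) - F (j + cd k i 0)) ≤ 0 := by
    apply Finset.sum_nonpos
    intro i _
    have := hF (show j + cd k i 0 ≤ j + 1 + cd k i 0 by omega)
    linarith
  linarith

lemma PP_step (k j d : ℕ) (hk : 3 ≤ k) (hd : d ≤ j + k / 2 + 1) :
    PP k (j + 1) < PP k j + 2 * (gg (d + 1) + gg d) := by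
  have h1 := Gam_step k j (fun x => 3 * gg (x + 1) + gg x) (by
    intro x y hxy
    have h1 := gg_anti hxy
    have h2 := gg_anti (show x + 1 ≤ y + 1 by omega)
    simp only
    linarith) hk
  have h2 : ∀ j, 3 * Gam k (j + 1) + Gam k j
      = ∑ i ∈ Finset.range k, (3 * gg (j + cd k i 0 + 1) + gg (j + cd k i 0)) := by
    intro j
    rw [Finset.sum_add_distrib, ← Finset.mul_sum]
    unfold Gam
    congr 2
    exact Finset.sum_congr rfl fun i _ => by congr 1; omega
  rw [← h2, ← h2] at h1
  unfold PP
  rw [Finset.sum_range_succ]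
  unfold psi
  have h3 := gg_anti hd
  have h4 := gg_anti (show d + 1 ≤ j + k / 2 + 1 + 1 by omega)
  have h5 := gg_strict (j + k / 2)
  have h6 := gg_anti (show j + 1 ≤ j + 2 by omega)
  linarith

/-- adding one path of earlier vertices -/
lemma PP_path (k m s c b : ℕ) (hk : 3 ≤ k) (hc : c ≤ k / 2) :
    PP k (m + s + b) ≤ PP k (m + s)
      + ∑ x ∈ Finset.range b, 2 * (gg (x + m + 2 + c) + gg (x + m + 1 + c)) ∧
    (0 < b → PP k (m + s + b) < PP k (m + s)
      + ∑ x ∈ Finset.range b, 2 * (gg (x + m + 2 + c) + gg (x + m + 1 + c))) := by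
  induction b with
  | zero => simp
  | succ b ih =>
    have h1 := PP_step k (m + s + b) (b + m + 1 + c) hk (by omega)
    rw [Finset.sum_range_succ]
    rw [show b + m + 1 + c + 1 = b + m + 2 + c by omega] at h1
    have h2 := ih.1
    rw [← add_assoc]
    constructor
    · linarith
    · intro _; linarith

lemma PP_cross (k : ℕ) (a : ℕ → ℕ) (m q : ℕ) (hk : 3 ≤ k) (hq : q < k) : ∀ t, t ≤ q → 
    PP k (m + ∑ i ∈ Finset.range t, a i) ≤ PP k m + 
      ∑ i ∈ Finset.range t, ∑ x ∈ Finset.range (a i),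
        2 * (gg (x + m + 2 + cd k i q) + gg (x + m + 1 + cd k i q)) ∧
    (0 < ∑ i ∈ Finset.range t, a i → PP k (m + ∑ i ∈ Finset.range t, a i) < PP k m + 
      ∑ i ∈ Finset.range t, ∑ x ∈ Finset.range (a i),
        2 * (gg (x + m + 2 + cd k i q) + gg (x + m + 1 + cd k i q))) := by
  intro t
  induction t with
  | zero => simp
  | succ t ih =>
    intro ht
    have h1 := ih (by omega)
    have h2 := PP_path k m (∑ i ∈ Finset.range t, a i) (cd k t q) (a t) hk (by unfold cd; omega)
    simp only [Finset.sum_range_succ _ t]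
    rw [← add_assoc]
    constructor
    · linarith [h1.1, h2.1]
    · intro h3
      by_cases h4 : 0 < a t
      · linarith [h1.1, h2.2 h4]
      · linarith [h1.2 (by omega), h2.1]

lemma concat_sum (a : ℕ → ℕ) (F : ℕ → ℝ) (k : ℕ) :
    ∑ q ∈ Finset.range k, ∑ m ∈ Finset.range (a q), F (m + ∑ i ∈ Finset.range q, a i)
      = ∑ j ∈ Finset.range (∑ i ∈ Finset.range k, a i), F j := by
  induction k with
  | zero => simp
  | succ k ih =>
    rw [Finset.sum_range_succ, ih, Finset.sum_range_succ, Finset.sum_range_add]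
    congr 1
    exact Finset.sum_congr rfl fun m _ => by rw [add_comm]

/-- total -/
noncomputable def TT (k : ℕ) (a : ℕ → ℕ) : ℝ := ∑ _q ∈ Finset.range k, 2 * Gam k 0
      + ∑ q ∈ Finset.range k, ∑ m ∈ Finset.range (a q), (PP k m + 2 + cross k a q m)

lemma TT_lt (k : ℕ) (a : ℕ → ℕ) (hk : 3 ≤ k) (i q : ℕ) (hiq : i < q) (hq : q < k)
    (hi : 0 < a i) (haq : 0 < a q) :
    TT k (fun j => if j = 0 then ∑ i ∈ Finset.range k, a i else 0) < TT k a := by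
  have h1 : TT k (fun j => if j = 0 then ∑ i ∈ Finset.range k, a i else 0)
      = ∑ _q ∈ Finset.range k, 2 * Gam k 0 + ∑ j ∈ Finset.range (∑ i ∈ Finset.range k, a i), (PP k j + 2) := by
    unfold TT
    congr 1
    rw [Finset.sum_eq_single 0]
    · simp [cross]
    · intro b _ hb; simp [hb]
    · intro h0; simp at h0; omega
  rw [h1, ← concat_sum a (fun j => PP k j + 2)]
  unfold TT
  apply add_lt_add_of_le_of_lt le_rfl
  apply Finset.sum_lt_sum
  · intro q hq
    apply Finset.sum_le_sum
    intro m _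
    have := (PP_cross k a m q hk (Finset.mem_range.1 hq) q le_rfl).1
    unfold cross
    linarith
  · refine ⟨q, Finset.mem_range.2 hq, ?_⟩
    apply Finset.sum_lt_sum_of_nonempty
    · simp; omega
    · intro m _
      have hs : 0 < ∑ i ∈ Finset.range q, a i :=
        Finset.sum_pos' (fun _ _ => Nat.zero_le _) ⟨i, Finset.mem_range.2 hiq, hi⟩
      have := (PP_cross k a m q hk hq q le_rfl).2 hs
      unfold cross
      linarith

section
variable {V : Type*} {G : SimpleGraph V} {k : ℕ} {a : ℕ → ℕ} {r h : V → ℕ}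

lemma Model.sum_deg [Fintype V] (M : Model G k a r h) :
    ∑ v : V, (deg G v : ℝ) = 2 * Fintype.card V := by
  have h1 : ∑ v : V, (deg G v : ℝ) = ∑ v : V, (mdeg a (r v) (h v) : ℝ) * (fun _ => (1:ℝ)) (h v) :=
    Finset.sum_congr rfl fun v _ => by rw [M.deg_eq]; simp
  rw [h1, M.sum_eq (fun i x => (mdeg a i x : ℝ) * (fun _ => (1:ℝ)) x)]
  simp only [mdeg_sum a _ (fun _ => (1:ℝ))]
  have h2 := M.sum_eq (fun _ _ => (1:ℝ))
  simp only [Finset.sum_const, Finset.card_univ, nsmul_eq_mul, mul_one, Finset.card_range] at h2 ⊢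
  rw [h2, Finset.mul_sum]
  refine Finset.sum_congr rfl fun i _ => ?_
  push_cast; ring

lemma Model.HA_eq [Fintype V] (M : Model G k a r h) :
    HA G + 2 * Fintype.card V = TT k a := by
  rw [← M.sum_deg, _root_.HA_eq_s16 G M.connected]
  unfold TT
  rw [← T_eq, ← M.sum_eq (fun q m => ∑ i ∈ Finset.range k, ∑ x ∈ Finset.range (a i + 1),
    (mdeg a i x : ℝ) * gg (DD k i x q m))]
  refine Finset.sum_congr rfl fun w _ => ?_
  rw [← M.sum_eq (fun i x => (mdeg a i x : ℝ) * gg (DD k i x (r w) (h w)))]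
  refine Finset.sum_congr rfl fun u _ => ?_
  rw [M.deg_eq, M.dist_eq]

lemma Model.unicyclic [Fintype V] (M : Model G k a r h) : Unicyclic G := by
  classical
  refine ⟨M.connected, ?_⟩
  have h1 := G.sum_degrees_eq_twice_card_edges
  have h2 : ∀ v, deg G v = G.degree v := by
    intro v
    unfold deg
    rw [Nat.card_eq_fintype_card, ← G.card_neighborSet_eq_degree]
    rfl
  have h3 := M.sum_deg
  simp only [h2] at h3
  have h4 : ∑ v : V, G.degree v = 2 * Fintype.card V := by exact_mod_cast h3
  rw [Nat.card_eq_fintype_card, ← SimpleGraph.edgeFinset_card]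
  omega
end

lemma card_le_deg {V : Type*} [Fintype V] (G : SimpleGraph V) (v : V) (S : Finset V)
    (hS : ∀ w ∈ S, G.Adj v w) : S.card ≤ deg G v := by
  classical
  unfold deg
  rw [Nat.card_eq_fintype_card, Fintype.card_subtype]
  apply Finset.card_le_card
  intro w hw
  simp [hS w hw]

lemma extract {V : Type*} [Fintype V] (G : SimpleGraph V) (hG : IsCyclePath G) (k : ℕ) (hk : 3 ≤ k)
    (c : ℕ → V) (cinj : ∀ i j, i < k → j < k → c i = c j → i = j)
    (cadj : ∀ i, i + 1 < k → G.Adj (c i) (c (i + 1))) (clast : G.Adj (c (k - 1)) (c 0))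
    (honc : ∀ i, i < k → OnCycle G (c i)) :
    ∃ a r h, Model G k a r h ∧ ∀ v, OnCycle G v → h v = 0 := by
  classical
  obtain ⟨⟨hc, hcard⟩, hdeg⟩ := hG
  obtain ⟨H, hHmem, hHle⟩ : ∃ H : V → ℕ, (∀ v, ∃ i, i < k ∧ G.dist v (c i) = H v) ∧
      (∀ v i, i < k → H v ≤ G.dist v (c i)) := by
    refine ⟨fun v => sInf {d | ∃ i, i < k ∧ G.dist v (c i) = d}, ?_, ?_⟩
    · intro v
      exact Nat.sInf_mem (s := {d | ∃ i, i < k ∧ G.dist v (c i) = d}) ⟨_, 0, by omega, rfl⟩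
    · intro v i hi
      exact Nat.sInf_le ⟨i, hi, rfl⟩
  have hHc : ∀ i, i < k → H (c i) = 0 := by
    intro i hi
    have := hHle (c i) i hi
    simpa using this
  have hidx : ∀ v, ∃ i, H v = 0 → i < k ∧ c i = v := by
    intro v
    obtain ⟨i, hi, hd⟩ := hHmem v
    refine ⟨i, fun h0 => ⟨hi, ?_⟩⟩
    rw [h0, hc.dist_eq_zero_iff] at hd
    exact hd.symm
  choose idx hidx using hidx
  have idxc : ∀ i, i < k → idx (c i) = i := by
    intro i hi
    obtain ⟨h1, h2⟩ := hidx (c i) (hHc i hi)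
    exact cinj _ _ h1 hi h2
  have hpar : ∀ v, ∃ u, H v ≠ 0 → G.Adj v u ∧ H u + 1 = H v := by
    intro v
    by_cases h0 : H v = 0
    · exact ⟨v, fun h => absurd h0 h⟩
    · obtain ⟨i, hi, hd⟩ := hHmem v
      obtain ⟨p, hp⟩ := hc.exists_walk_length_eq_dist v (c i)
      rw [hd] at hp
      cases p with
      | nil => exact absurd hp.symm h0
      | @cons _ u _ hadj p =>
        refine ⟨u, fun _ => ⟨hadj, ?_⟩⟩
        simp only [Walk.length_cons] at hp
        have h1 := hHle u i hi
        have h2 := dist_le p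
        obtain ⟨j, hj, hdj⟩ := hHmem u
        have h3 := hHle v j hj
        have h4 := hc.dist_triangle (u := v) (v := u) (w := c j)
        have h5 := dist_eq_one_iff_adj.2 hadj
        omega
  choose par hpar using hpar
  -- successor on the cycle
  obtain ⟨sc, hsc⟩ : ∃ sc : ℕ → ℕ, ∀ i, sc i = if i + 1 < k then i + 1 else 0 := ⟨_, fun _ => rfl⟩
  have hsclt : ∀ i, sc i < k := by intro i; rw [hsc]; split_ifs <;> omega
  have scadj : ∀ i, i < k → G.Adj (c i) (c (sc i)) := by
    intro i hi
    rw [hsc]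
    split_ifs with h1
    · exact cadj i h1
    · rw [show i = k - 1 by omega]; exact clast
  obtain ⟨e, he0, he1⟩ : ∃ e : V → Sym2 V, (∀ v, H v = 0 → e v = s(v, c (sc (idx v)))) ∧
      (∀ v, H v ≠ 0 → e v = s(v, par v)) :=
    ⟨fun v => if H v = 0 then s(v, c (sc (idx v))) else s(v, par v),
      fun v hv => by simp [hv], fun v hv => by simp [hv]⟩
  have hemem : ∀ v, e v ∈ G.edgeSet := by
    intro v
    by_cases h0 : H v = 0
    · rw [he0 v h0, mem_edgeSet]
      obtain ⟨h1, h2⟩ := hidx v h0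
      have := scadj _ h1
      rwa [h2] at this
    · rw [he1 v h0, mem_edgeSet]
      exact (hpar v h0).1
  have heinj : Function.Injective e := by
    intro u v huv
    by_cases hu : H u = 0
    · by_cases hv : H v = 0
      · rw [he0 u hu, he0 v hv, Sym2.eq_iff] at huv
        rcases huv with h | ⟨h1, h2⟩
        · exact h.1
        · exfalso
          have h3 := idxc _ (hsclt (idx v))
          have h4 := idxc _ (hsclt (idx u))
          rw [← h1, hsc] at h3
          rw [h2, hsc] at h4
          have := (hidx u hu).1
          have := (hidx v hv).1
          split_ifs at h3 h4 <;> omega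
      · exfalso
        rw [he0 u hu, he1 v hv, Sym2.eq_iff] at huv
        have h5 := hHc _ (hsclt (idx u))
        rcases huv with ⟨h1, h2⟩ | ⟨h1, h2⟩
        · rw [h1] at hu; exact hv hu
        · rw [h2] at h5; exact hv h5
    · by_cases hv : H v = 0
      · exfalso
        rw [he1 u hu, he0 v hv, Sym2.eq_iff] at huv
        have h5 := hHc _ (hsclt (idx v))
        rcases huv with ⟨h1, h2⟩ | ⟨h1, h2⟩
        · rw [h1] at hu; exact hu hv
        · rw [← h1] at h5; exact hu h5
      · rw [he1 u hu, he1 v hv, Sym2.eq_iff] at huv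
        rcases huv with h | ⟨h1, h2⟩
        · exact h.1
        · exfalso
          have h3 := (hpar u hu).2
          have h4 := (hpar v hv).2
          rw [h2] at h3
          rw [← h1] at h4
          omega
  have hesurj : ∀ x ∈ G.edgeSet, ∃ v, e v = x := by
    have hb : Function.Bijective (fun v => (⟨e v, hemem v⟩ : G.edgeSet)) := by
      apply Function.Injective.bijective_of_nat_card_le
      · intro u v huv
        exact heinj (congrArg Subtype.val huv)
      · rw [hcard, Nat.card_eq_fintype_card]
    intro x hx
    obtain ⟨v, hv⟩ := hb.2 ⟨x, hx⟩
    exact ⟨v, congrArg Subtype.val hv⟩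
  have adjc : ∀ u v, G.Adj u v → (H u ≠ 0 ∧ v = par u) ∨ (H v ≠ 0 ∧ u = par v) ∨
      (H u = 0 ∧ H v = 0 ∧ (idx v = sc (idx u) ∨ idx u = sc (idx v))) := by
    intro u v huv
    obtain ⟨w, hw⟩ := hesurj s(u, v) ((mem_edgeSet G).2 huv)
    by_cases h0 : H w = 0
    · rw [he0 w h0, Sym2.eq_iff] at hw
      have h5 := hHc _ (hsclt (idx w))
      have h6 := idxc _ (hsclt (idx w))
      right; right
      rcases hw with ⟨h1, h2⟩ | ⟨h1, h2⟩
      · subst h1; subst h2; exact ⟨h0, h5, Or.inl h6⟩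
      · subst h1; subst h2; exact ⟨h5, h0, Or.inr h6⟩
    · rw [he1 w h0, Sym2.eq_iff] at hw
      rcases hw with ⟨h1, h2⟩ | ⟨h1, h2⟩
      · subst h1; exact Or.inl ⟨h0, h2.symm⟩
      · subst h1; exact Or.inr (Or.inl ⟨h0, h2.symm⟩)
  -- off-cycle vertices are not on a cycle
  have honc0 : ∀ v, OnCycle G v → H v = 0 := by
    rintro v ⟨p, hp⟩
    obtain ⟨x, hx, hmax⟩ := Finset.exists_max_image p.support.toFinset H ⟨v, by simp⟩
    rw [List.mem_toFinset] at hx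
    by_contra hv0
    have hx0 : H x ≠ 0 := by
      have := hmax v (by simp)
      omega
    have hq := hp.rotate hx
    have hsub : ∀ y ∈ (p.rotate x hx).support, H y ≤ H x := by
      intro y hy
      apply hmax
      rw [List.mem_toFinset]
      unfold Walk.rotate at hy
      rw [Walk.mem_support_append_iff] at hy
      rcases hy with hy | hy
      · exact p.support_dropUntil_subset_support hx hy
      · exact p.support_takeUntil_subset_support hx hy
    have key : ∀ y, G.Adj x y → H y ≤ H x → y = par x := by
      intro y hxy hle
      rcases adjc x y hxy with h1 | h1 | h1
      · exact h1.2
      · exfalso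
        have := (hpar y h1.1).2
        rw [← h1.2] at this
        omega
      · exact absurd h1.1 hx0
    apply hq.snd_ne_penultimate
    rw [key _ (Walk.adj_snd hq.not_nil) (hsub _ (Walk.getVert_mem_support _ _)),
      key _ (Walk.adj_penultimate hq.not_nil).symm (hsub _ (Walk.getVert_mem_support _ _))]
  -- parents are injective
  have parinj : ∀ u v, H u ≠ 0 → H v ≠ 0 → par u = par v → u = v := by
    intro u v hu hv huv
    by_contra hne
    obtain ⟨hu1, hu2⟩ := hpar u hu
    obtain ⟨hv1, hv2⟩ := hpar v hv
    rw [← huv] at hv1 hv2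
    generalize par u = w at *
    by_cases hw : H w = 0
    · obtain ⟨hi, hiw⟩ := hidx w hw
      obtain ⟨pr, hpr, hpr2⟩ : ∃ pr, pr < k ∧ sc pr = idx w := by
        by_cases h0 : idx w = 0
        · exact ⟨k - 1, by omega, by rw [hsc]; split_ifs <;> omega⟩
        · exact ⟨idx w - 1, by omega, by rw [hsc]; split_ifs <;> omega⟩
      have hne2 : c pr ≠ c (sc (idx w)) := by
        intro h
        have := cinj _ _ hpr (hsclt _) h
        rw [hsc] at this hpr2
        split_ifs at this hpr2 <;> omega
      have a1 : G.Adj w (c (sc (idx w))) := by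
        have := scadj _ hi
        rwa [hiw] at this
      have a2 : G.Adj w (c pr) := by
        have := scadj _ hpr
        rw [hpr2, hiw] at this
        exact this.symm
      have h4 := card_le_deg G w {u, v, c pr, c (sc (idx w))} (by
        intro x hx
        simp only [Finset.mem_insert, Finset.mem_singleton] at hx
        rcases hx with rfl | rfl | rfl | rfl
        · exact hu1.symm
        · exact hv1.symm
        · exact a2
        · exact a1)
      have off : ∀ x, H x ≠ 0 → ∀ i, i < k → x ≠ c i := by
        rintro x hx i hi rfl
        exact hx (hHc i hi)
      rw [Finset.card_insert_of_notMem, Finset.card_insert_of_notMem, Finset.card_pair hne2] at h4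
      · have := (hdeg w).1 (hiw ▸ honc _ hi)
        omega
      · simp [off v hv pr hpr, off v hv _ (hsclt (idx w))]
      · simp [hne, off u hu pr hpr, off u hu _ (hsclt (idx w))]
    · obtain ⟨hw1, hw2⟩ := hpar w hw
      have h4 := card_le_deg G w {u, v, par w} (by
        intro x hx
        simp only [Finset.mem_insert, Finset.mem_singleton] at hx
        rcases hx with rfl | rfl | rfl
        · exact hu1.symm
        · exact hv1.symm
        · exact hw1)
      have n1 : u ≠ par w := by rintro rfl; omega
      have n2 : v ≠ par w := by rintro rfl; omega
      rw [Finset.card_insert_of_notMem, Finset.card_pair n2] at h4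
      · have := (hdeg w).2 (fun h => hw (honc0 w h))
        omega
      · simp [hne, n1]
  -- roots
  obtain ⟨R, hR⟩ : ∃ R : V → ℕ, ∀ v, R v = idx (par^[H v] v) := ⟨_, fun _ => rfl⟩
  have hR0 : ∀ v, H v = 0 → R v = idx v := by
    intro v hv; rw [hR, hv]; rfl
  have hRp : ∀ v, H v ≠ 0 → R (par v) = R v := by
    intro v hv
    rw [hR, hR, ← (hpar v hv).2, Function.iterate_succ_apply]
  have hRlt : ∀ d v, H v = d → R v < k := by
    intro d
    induction d with
    | zero => intro v hv; rw [hR0 v hv]; exact (hidx v hv).1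
    | succ d ih =>
      intro v hv
      have h1 := hpar v (by omega)
      rw [← hRp v (by omega)]
      exact ih _ (by omega)
  have hinj : ∀ d u v, H u = d → H v = d → R u = R v → u = v := by
    intro d
    induction d with
    | zero =>
      intro u v hu hv huv
      rw [hR0 u hu, hR0 v hv] at huv
      rw [← (hidx u hu).2, ← (hidx v hv).2, huv]
    | succ d ih =>
      intro u v hu hv huv
      have h1 := hpar u (by omega)
      have h2 := hpar v (by omega)
      apply parinj u v (by omega) (by omega)
      apply ih _ _ (by omega) (by omega)
      rw [hRp u (by omega), hRp v (by omega), huv]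
  refine ⟨fun i => (Finset.univ.filter (fun v => R v = i)).sup H, R, H, ⟨hk, ?_, ?_, ?_, ?_, ?_⟩, honc0⟩
  · intro u v h1 h2
    exact hinj _ u v rfl h2.symm h1
  · intro v; exact hRlt _ v rfl
  · intro v
    exact Finset.le_sup (f := H) (by simp)
  · intro i hi j hj
    have desc : ∀ d v, H v = j + d → ∃ w, R w = R v ∧ H w = j := by
      intro d
      induction d with
      | zero => intro v hv; exact ⟨v, rfl, hv⟩
      | succ d ih =>
        intro v hv
        have h1 := hpar v (by omega)
        obtain ⟨w, hw1, hw2⟩ := ih (par v) (by omega)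
        exact ⟨w, by rw [hw1, hRp v (by omega)], hw2⟩
    obtain ⟨v, hv, hv2⟩ := Finset.exists_mem_eq_sup (Finset.univ.filter (fun v => R v = i))
      ⟨c i, by simp [hR0 _ (hHc i hi), idxc i hi]⟩ H
    rw [hv2] at hj
    obtain ⟨w, hw1, hw2⟩ := desc (H v - j) v (by omega)
    simp only [Finset.mem_filter, Finset.mem_univ, true_and] at hv
    exact ⟨w, by rw [hw1, hv], hw2⟩
  · intro u v
    constructor
    · intro huv
      unfold madj
      rcases adjc u v huv with ⟨h1, rfl⟩ | ⟨h1, rfl⟩ | ⟨h1, h2, h3⟩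
      · have := (hpar u h1).2
        have := hRp u h1
        omega
      · have := (hpar v h1).2
        have := hRp v h1
        omega
      · rw [hR0 u h1, hR0 v h2]
        have := (hidx u h1).1
        have := (hidx v h2).1
        rw [hsc, hsc] at h3
        split_ifs at h3 <;> omega
    · intro hm
      rcases hm with ⟨h1, h2 | h2⟩ | ⟨h1, h2, h3⟩
      · have h3 := hpar u (by omega)
        have : par u = v := hinj _ _ _ rfl (by omega) (by rw [hRp u (by omega), h1])
        rw [← this]; exact h3.1
      · have h3 := hpar v (by omega)
        have : par v = u := hinj _ _ _ rfl (by omega) (by rw [hRp v (by omega), h1])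
        rw [← this]; exact h3.1.symm
      · rw [hR0 u h1, hR0 v h2] at h3
        obtain ⟨u1, u2⟩ := hidx u h1
        obtain ⟨v1, v2⟩ := hidx v h2
        have h4 : idx v = sc (idx u) ∨ idx u = sc (idx v) := by
          rw [hsc, hsc]
          split_ifs <;> omega
        rcases h4 with h4 | h4
        · have := scadj _ u1
          rwa [← h4, u2, v2] at this
        · have := scadj _ v1
          rw [← h4, u2, v2] at this
          exact this.symm

lemma extract' {V : Type*} [Fintype V] (G : SimpleGraph V) (hG : IsCyclePath G)
    (hex : ∃ v, OnCycle G v) :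
    ∃ k a r h, Model G k a r h ∧ ∀ v, OnCycle G v → h v = 0 := by
  classical
  obtain ⟨v, p, hp⟩ := hex
  have h3 := hp.three_le_length
  refine ⟨p.length, extract G hG p.length h3 p.getVert ?_ ?_ ?_ ?_⟩
  · intro i j hi hj hij
    exact hp.getVert_injOn' (by simp; omega) (by simp; omega) hij
  · intro i hi
    exact p.adj_getVert_succ (by omega)
  · have := p.adj_getVert_succ (i := p.length - 1) (by omega)
    rw [show p.length - 1 + 1 = p.length by omega] at this
    simpa using this
  · intro i hi
    exact ⟨p.rotate _ (p.getVert_mem_support i), hp.rotate _⟩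

lemma Model.onCycle {V : Type*} {G : SimpleGraph V} {k : ℕ} {a : ℕ → ℕ} {r h : V → ℕ}
    (M : Model G k a r h) (v : V) (hr : r v = 0) (hh : h v = 0) : OnCycle G v := by
  classical
  have k3 := M.k3
  obtain ⟨w, hw1, hw2⟩ := M.surj 1 (by omega) 0 (by omega)
  have hadj : G.Adj v w := (M.adj _ _).2 (by unfold madj; omega)
  have hreach : ∀ d x, r x = d + 1 → h x = 0 → (G \ fromEdgeSet {s(v, w)}).Reachable w x := by
    intro d
    induction d with
    | zero =>
      intro x h1 h2
      rw [M.inj w x (by omega) (by omega)]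
    | succ d ih =>
      intro x h1 h2
      have := M.rlt x
      obtain ⟨y, hy1, hy2⟩ := M.surj (d + 1) (by omega) 0 (by omega)
      refine (ih y hy1 hy2).trans (Adj.reachable ?_)
      rw [sdiff_adj]
      refine ⟨(M.adj _ _).2 (by unfold madj; omega), ?_⟩
      rw [fromEdgeSet_adj]
      rintro ⟨h3, _⟩
      rw [Set.mem_singleton_iff, Sym2.eq_iff] at h3
      rcases h3 with ⟨rfl, rfl⟩ | ⟨rfl, rfl⟩ <;> omega
  obtain ⟨x, hx1, hx2⟩ := M.surj (k - 1) (by omega) 0 (by omega)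
  have h1 := hreach (k - 2) x (by omega) hx2
  have h2 : (G \ fromEdgeSet {s(v, w)}).Adj x v := by
    rw [sdiff_adj]
    refine ⟨(M.adj _ _).2 (by unfold madj; omega), ?_⟩
    rw [fromEdgeSet_adj]
    rintro ⟨h3, _⟩
    rw [Set.mem_singleton_iff, Sym2.eq_iff] at h3
    rcases h3 with ⟨rfl, rfl⟩ | ⟨rfl, h5⟩ <;> omega
  obtain ⟨u, p, hp, hmem⟩ := adj_and_reachable_delete_edges_iff_exists_cycle.1
    ⟨hadj, (h1.trans h2.reachable).symm⟩
  exact ⟨p.rotate v (p.fst_mem_support_of_mem_edges hmem), hp.rotate _⟩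

lemma exists_target (n k p : ℕ) (hk : 3 ≤ k) (hn : n = k + p) :
    ∃ (G : SimpleGraph (Fin n)) (r h : Fin n → ℕ), Model G k (fun j => if j = 0 then p else 0) r h := by
  refine ⟨⟨fun u v => madj k (if (u : ℕ) < k then u else 0) (if (u : ℕ) < k then 0 else u - k + 1)
    (if (v : ℕ) < k then v else 0) (if (v : ℕ) < k then 0 else v - k + 1), ⟨?_⟩, ⟨?_⟩⟩,
    fun u => if (u : ℕ) < k then u else 0, fun u => if (u : ℕ) < k then 0 else u - k + 1, hk, ?_, ?_, ?_, ?_, ?_⟩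
  · intro u v huv
    unfold madj at *
    omega
  · intro u hu
    unfold madj at hu
    omega
  · intro u v h1 h2
    ext
    split_ifs at h1 h2 <;> omega
  · intro v
    split_ifs <;> omega
  · intro v
    have := v.2
    split_ifs <;> omega
  · intro i hi j hj
    by_cases h0 : j = 0
    · exact ⟨⟨i, by omega⟩, by simp [hi], by simp [hi, h0]⟩
    · have h1 : i = 0 := by
        by_contra h; simp [h] at hj; omega
      simp [h1] at hj
      refine ⟨⟨k + j - 1, by omega⟩, ?_, ?_⟩
      · simp only; split_ifs <;> omega
      · simp only; split_ifs <;> omega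
  · intro u v; rfl

theorem stmt16 (n : ℕ) (G : SimpleGraph (Fin n)) (hG : IsCyclePath G)
    (h : 2 ≤ Nat.card {v // OnCycle G v ∧ 3 ≤ deg G v}) :
    ∃ G' : SimpleGraph (Fin n), IsCyclePath G' ∧
      Nat.card {v // OnCycle G' v ∧ 3 ≤ deg G' v} = 1 ∧ HA G > HA G' := by
  classical
  rw [Nat.card_eq_fintype_card] at h
  obtain ⟨⟨u, hu1, hu2⟩, ⟨v, hv1, hv2⟩, huv⟩ := Fintype.one_lt_card_iff.1 (Nat.lt_of_lt_of_le one_lt_two h)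
  have hne : u ≠ v := fun e => huv (Subtype.ext e)
  obtain ⟨k, a, r, ht, M, hM⟩ := extract' G hG ⟨u, hu1⟩
  have k3 := M.k3
  have hu0 := hM u hu1
  have hv0 := hM v hv1
  rw [M.deg_eq] at hu2 hv2
  have hau : 0 < a (r u) := by
    unfold mdeg at hu2
    split_ifs at hu2 <;> omega
  have hav : 0 < a (r v) := by
    unfold mdeg at hv2
    split_ifs at hv2 <;> omega
  have hr : r u ≠ r v := fun e => hne (M.inj _ _ e (by omega))
  obtain ⟨i, q, hiq, hq, hi, haq⟩ : ∃ i q, i < q ∧ q < k ∧ 0 < a i ∧ 0 < a q := by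
    rcases lt_or_gt_of_ne hr with h1 | h1
    · exact ⟨_, _, h1, M.rlt v, hau, hav⟩
    · exact ⟨_, _, h1, M.rlt u, hav, hau⟩
  have hlt := TT_lt k a k3 i q hiq hq hi haq
  have hp : 0 < ∑ i ∈ Finset.range k, a i :=
    Finset.sum_pos' (fun _ _ => Nat.zero_le _) ⟨q, Finset.mem_range.2 hq, haq⟩
  have hn : n = k + ∑ i ∈ Finset.range k, a i := by
    have h2 := M.sum_eq (fun _ _ => (1:ℝ))
    simp only [Finset.sum_const, Finset.card_univ, nsmul_eq_mul, mul_one, Finset.card_range,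
      Fintype.card_fin] at h2
    have h3 : n = ∑ i ∈ Finset.range k, (a i + 1) := by exact_mod_cast h2
    rw [h3, Finset.sum_add_distrib]
    simp [add_comm]
  generalize ∑ i ∈ Finset.range k, a i = p at *
  obtain ⟨G', r', h', M'⟩ := exists_target n k p k3 hn
  obtain ⟨z, hz1, hz2⟩ := M'.surj 0 (by omega) 0 (by omega)
  have hzc := M'.onCycle z hz1 hz2
  have hzd : deg G' z = 3 := by
    rw [M'.deg_eq, hz1, hz2]
    simp [mdeg]; omega
  have hd : ∀ v, deg G' v ≤ 3 ∧ (3 ≤ deg G' v → v = z) := by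
    intro v
    rw [M'.deg_eq]
    unfold mdeg
    constructor
    · split_ifs <;> omega
    · intro h3
      by_cases h0 : h' v = 0
      · by_cases h1 : r' v = 0
        · exact M'.inj _ _ (by omega) (by omega)
        · simp [h0, h1] at h3
      · rw [if_neg h0] at h3
        split_ifs at h3 <;> omega
  refine ⟨G', ⟨M'.unicyclic, fun v => ⟨fun _ => (hd v).1, fun hv => ?_⟩⟩, ?_, ?_⟩
  · by_contra h3
    exact hv ((hd v).2 (by omega) ▸ hzc)
  · rw [Nat.card_eq_one_iff_unique]
    refine ⟨⟨fun x y => Subtype.ext ?_⟩, ⟨⟨z, hzc, by omega⟩⟩⟩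
    rw [(hd x).2 x.2.2, (hd y).2 y.2.2]
  · have e1 := M.HA_eq
    have e2 := M'.HA_eq
    linarith
end
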